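/- Let G be a closed subgroup of O(N) satisfying (G1) and (G2), and σ : G → {1,−1} a continuous surjective group homomorphism. Then E(·;ℝ^N) attains its minimum on the Nehari manifold N(ℝ^N)^σ_G: there exists u ∈ N(ℝ^N)^σ_G with E(u;ℝ^N) = m(ℝ^N)^σ_G. Consequently, the fractional critical Schrödinger equation has a nontrivial σ-equivariant solution: there exists u ∈ Ḣ^s(ℝ^N)^σ_G, not a.e. zero, with ⟨E'(u;ℝ^N), v⟩ = 0 for all v ∈ Ḣ^s(ℝ^N). -/

import Mathlib

open MeasureTheory Real

noncomputable section

abbrev Euc (N : ℕ) := EuclideanSpace ℝ (Fin N)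

/-- The critical exponent `2*_s = 2N/(N-2s)`. -/
def twoStar (N : ℕ) (s : ℝ) : ℝ := 2 * N / (N - 2 * s)

/-- Square of the Gagliardo seminorm `‖u‖²`. -/
def gagSq (N : ℕ) (s : ℝ) (u : Euc N → ℝ) : ℝ :=
  ∫ p : Euc N × Euc N, (u p.1 - u p.2) ^ 2 / dist p.1 p.2 ^ ((N : ℝ) + 2 * s)

/-- The Gagliardo seminorm `‖u‖`. -/
def gagNorm (N : ℕ) (s : ℝ) (u : Euc N → ℝ) : ℝ := Real.sqrt (gagSq N s u)

/-- Finiteness of the Gagliardo seminorm (`‖u‖ < ∞`). -/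
def GagFinite (N : ℕ) (s : ℝ) (u : Euc N → ℝ) : Prop :=
  Integrable (fun p : Euc N × Euc N => (u p.1 - u p.2) ^ 2 / dist p.1 p.2 ^ ((N : ℝ) + 2 * s))

/-- Membership in `Ḣ^s(Ω)`: measurable, in `L^{2*_s}(ℝ^N)`, finite Gagliardo seminorm,
and vanishing a.e. outside `Ω`. -/
structure MemHs (N : ℕ) (s : ℝ) (Ω : Set (Euc N)) (u : Euc N → ℝ) : Prop where
  meas : Measurable u
  lp : Integrable fun x : Euc N => |u x| ^ twoStar N s
  fin : GagFinite N s u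
  vanish : ∀ᵐ x : Euc N, x ∉ Ω → u x = 0

/-- The energy functional `E(u;Ω)`. -/
def energy (N : ℕ) (s : ℝ) (Ω : Set (Euc N)) (u : Euc N → ℝ) : ℝ :=
  (1 / 2) * gagSq N s u - (1 / twoStar N s) * ∫ x in Ω, |u x| ^ twoStar N s

/-- The Nehari functional `N(u;Ω)`. -/
def nehariFun (N : ℕ) (s : ℝ) (Ω : Set (Euc N)) (u : Euc N → ℝ) : ℝ :=
  gagSq N s u - ∫ x in Ω, |u x| ^ twoStar N s

/-- The pairing `⟨E'(u), v⟩` (with domain `Ω`). -/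
def pairing (N : ℕ) (s : ℝ) (Ω : Set (Euc N)) (u v : Euc N → ℝ) : ℝ :=
  (∫ p : Euc N × Euc N, (u p.1 - u p.2) * (v p.1 - v p.2) / dist p.1 p.2 ^ ((N : ℝ) + 2 * s))
    - ∫ x in Ω, |u x| ^ (twoStar N s - 2) * u x * v x

/-- The sharp fractional Sobolev constant `S(N,s)`. -/
def sobolevS (N : ℕ) (s : ℝ) : ℝ :=
  (2 : ℝ) ^ (-(2 * s)) * Real.pi ^ (-s) *
    (Real.Gamma ((N - 2 * s) / 2) / Real.Gamma ((N + 2 * s) / 2)) *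
    (Real.Gamma N / Real.Gamma (N / 2)) ^ (2 * s / N)

/-- The orthogonal group `O(N)`. -/
abbrev ONgrp (N : ℕ) := Matrix.orthogonalGroup (Fin N) ℝ

/-- The linear action of `O(N)` on `ℝ^N`. -/
def ogAct {N : ℕ} (g : ONgrp N) (x : Euc N) : Euc N :=
  Matrix.toEuclideanLin (g : Matrix (Fin N) (Fin N) ℝ) x

/-- `σ`-equivariance of `u : ℝ^N → ℝ` under a subgroup `G` of `O(N)`:
`u (g x) = σ(g) u (x)` for all `g ∈ G`, `x ∈ ℝ^N`. -/
def IsEquivariant {N : ℕ} (G : Subgroup (ONgrp N)) (σ : G →* ℤˣ) (u : Euc N → ℝ) : Prop :=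
  ∀ g : G, ∀ x : Euc N, u (ogAct (g : ONgrp N) x) = ((σ g : ℤ) : ℝ) * u x

/-- `G`-invariance of a set. -/
def IsInvariantSet {N : ℕ} (G : Subgroup (ONgrp N)) (Ω : Set (Euc N)) : Prop :=
  ∀ g : G, ∀ x ∈ Ω, ogAct (g : ONgrp N) x ∈ Ω

/-- Condition (G1): every `G`-orbit is infinite or a single point. -/
def CondG1 {N : ℕ} (G : Subgroup (ONgrp N)) : Prop :=
  ∀ x : Euc N, ({y : Euc N | ∃ g : G, ogAct (g : ONgrp N) x = y}).Infinite ∨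
    ∀ g : G, ogAct (g : ONgrp N) x = x

/-- Condition (G2): there is a point `ξ` with `σ = 1` on the stabilizer of `ξ`. -/
def CondG2 {N : ℕ} (G : Subgroup (ONgrp N)) (σ : G →* ℤˣ) : Prop :=
  ∃ ξ : Euc N, ∀ g : G, ogAct (g : ONgrp N) ξ = ξ → σ g = 1

/-- The Nehari level `m(Ω)^σ_G = inf { E(u;Ω) : u ∈ N(Ω)^σ_G }`. -/
def mval (N : ℕ) (s : ℝ) (Ω : Set (Euc N)) (G : Subgroup (ONgrp N)) (σ : G →* ℤˣ) : ℝ :=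
  sInf {c : ℝ | ∃ u : Euc N → ℝ, MemHs N s Ω u ∧ IsEquivariant G σ u ∧
    ¬ (∀ᵐ x : Euc N, u x = 0) ∧ nehariFun N s Ω u = 0 ∧ c = energy N s Ω u}

section

open Filter Topology

section BrezisLieb

lemma exists_abs_add_rpow_le {q ε : ℝ} (hq : 0 < q) (hε : 0 < ε) :
    ∃ C : ℝ, 0 ≤ C ∧ ∀ a b : ℝ, |a + b| ^ q ≤ (1 + ε) * |a| ^ q + C * |b| ^ q := by
  have hc : ContinuousAt (fun t : ℝ => (1 + t) ^ q) 0 :=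
    (continuousAt_const.add continuousAt_id).rpow_const (Or.inr hq.le)
  have h1 : ∀ᶠ t in 𝓝[>] (0 : ℝ), (1 + t) ^ q < 1 + ε := by
    have : ∀ᶠ t in 𝓝 (0 : ℝ), (1 + t) ^ q < 1 + ε :=
      hc.eventually (gt_mem_nhds (by simp [hε]))
    exact this.filter_mono nhdsWithin_le_nhds
  obtain ⟨δ, hδ, hδ0⟩ := (h1.and self_mem_nhdsWithin).exists
  have hδ0 : 0 < δ := hδ0
  refine ⟨(1 + 1 / δ) ^ q, by positivity, fun a b => ?_⟩
  by_cases hab : |b| ≤ δ * |a|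
  · calc |a + b| ^ q ≤ ((1 + δ) * |a|) ^ q := by
          apply rpow_le_rpow (abs_nonneg _) _ hq.le
          linarith [abs_add_le a b]
      _ = (1 + δ) ^ q * |a| ^ q := mul_rpow (by positivity) (abs_nonneg _)
      _ ≤ (1 + ε) * |a| ^ q := by gcongr
      _ ≤ _ := le_add_of_nonneg_right (by positivity)
  · push Not at hab
    have hab' : |a| ≤ 1 / δ * |b| := by
      rw [one_div, ← div_eq_inv_mul, le_div_iff₀ hδ0]; linarith
    calc |a + b| ^ q ≤ ((1 + 1 / δ) * |b|) ^ q := by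
          apply rpow_le_rpow (abs_nonneg _) _ hq.le
          linarith [abs_add_le a b]
      _ = (1 + 1 / δ) ^ q * |b| ^ q := mul_rpow (by positivity) (abs_nonneg _)
      _ ≤ _ := le_add_of_nonneg_left (by positivity)

lemma exists_abs_abs_add_rpow_sub_le {q ε : ℝ} (hq : 0 < q) (hε : 0 < ε) :
    ∃ C : ℝ, 0 ≤ C ∧ ∀ a b : ℝ,
      |(|a + b| ^ q - |a| ^ q - |b| ^ q)| ≤ ε * |a| ^ q + C * |b| ^ q := by
  set η := min 1 (ε / 2) with hη
  have hη0 : 0 < η := by positivity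
  have hη1 : η ≤ 1 := min_le_left _ _
  have hη2 : η ≤ ε / 2 := min_le_right _ _
  obtain ⟨C, hC, h⟩ := exists_abs_add_rpow_le hq hη0
  refine ⟨2 * C + 1, by positivity, fun a b => ?_⟩
  have h1 := h a b
  have h2 := h (a + b) (-b)
  rw [abs_neg, add_neg_cancel_right] at h2
  have ha : 0 ≤ |a| ^ q := by positivity
  have hb : 0 ≤ |b| ^ q := by positivity
  have hab : 0 ≤ |a + b| ^ q := by positivity
  rw [abs_le]
  constructor
  · nlinarith [mul_nonneg hC hb, mul_nonneg hη0.le (sub_nonneg.2 h1),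
      mul_nonneg (sub_nonneg.2 hη1) ha, mul_nonneg (sub_nonneg.2 hη1) (mul_nonneg hC hb),
      mul_nonneg (mul_nonneg hη0.le (sub_nonneg.2 hη1)) ha,
      mul_nonneg (sub_nonneg.2 hη2) ha]
  · nlinarith [mul_nonneg hC hb, mul_nonneg (sub_nonneg.2 hη2) ha]

variable {α : Type*} [MeasurableSpace α] {μ : Measure α}

lemma integrable_rpow_of_tendsto_ae {q K : ℝ} (hq : 0 < q) {f : ℕ → α → ℝ} {g : α → ℝ}
    (hfm : ∀ n, AEStronglyMeasurable (f n) μ)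
    (hf : ∀ n, Integrable (fun x => |f n x| ^ q) μ) (hK : ∀ n, ∫ x, |f n x| ^ q ∂μ ≤ K)
    (hlim : ∀ᵐ x ∂μ, Tendsto (fun n => f n x) atTop (𝓝 (g x))) :
    Integrable (fun x => |g x| ^ q) μ := by
  have hgm : AEStronglyMeasurable g μ := aestronglyMeasurable_of_tendsto_ae _ hfm hlim
  have hgm' : AEStronglyMeasurable (fun x => |g x| ^ q) μ :=
    (hgm.norm.aemeasurable.pow_const q).aestronglyMeasurable
  refine ⟨hgm', ?_⟩
  have hfin : ∫⁻ x, ‖|g x| ^ q‖ₑ ∂μ ≤ ENNReal.ofReal K := by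
    calc ∫⁻ x, ‖|g x| ^ q‖ₑ ∂μ
        ≤ ∫⁻ x, liminf (fun n => ‖|f n x| ^ q‖ₑ) atTop ∂μ := by
          apply lintegral_mono_ae
          filter_upwards [hlim] with x hx
          have : Tendsto (fun n => ‖|f n x| ^ q‖ₑ) atTop (𝓝 ‖|g x| ^ q‖ₑ) :=
            ((hx.abs).rpow_const (Or.inr hq.le)).enorm
          exact this.liminf_eq.ge
      _ ≤ liminf (fun n => ∫⁻ x, ‖|f n x| ^ q‖ₑ ∂μ) atTop :=
          lintegral_liminf_le' fun n => (hf n).aestronglyMeasurable.enorm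
      _ ≤ ENNReal.ofReal K := by
          refine liminf_le_of_frequently_le' (Frequently.of_forall fun n => ?_)
          rw [← ofReal_integral_norm_eq_lintegral_enorm (hf n)]
          apply ENNReal.ofReal_le_ofReal
          refine le_trans (le_of_eq ?_) (hK n)
          congr 1; ext x; exact norm_of_nonneg (by positivity)
  exact hfin.trans_lt ENNReal.ofReal_lt_top

/-- Brezis–Lieb lemma. -/
lemma brezis_lieb {q K : ℝ} (hq : 0 < q) {f : ℕ → α → ℝ} {g : α → ℝ}
    (hfm : ∀ n, AEStronglyMeasurable (f n) μ)
    (hf : ∀ n, Integrable (fun x => |f n x| ^ q) μ) (hK : ∀ n, ∫ x, |f n x| ^ q ∂μ ≤ K)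
    (hlim : ∀ᵐ x ∂μ, Tendsto (fun n => f n x) atTop (𝓝 (g x))) :
    Tendsto (fun n => ∫ x, |f n x| ^ q ∂μ - ∫ x, |f n x - g x| ^ q ∂μ) atTop
      (𝓝 (∫ x, |g x| ^ q ∂μ)) := by
  have hg := integrable_rpow_of_tendsto_ae hq hfm hf hK hlim
  have hgm : AEStronglyMeasurable g μ := aestronglyMeasurable_of_tendsto_ae _ hfm hlim
  obtain ⟨C₁, hC₁, hC₁'⟩ := exists_abs_add_rpow_le (ε := 1) hq one_pos
  have hdm : ∀ n, AEStronglyMeasurable (fun x => |f n x - g x| ^ q) μ := fun n =>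
    ((((hfm n).sub hgm).norm.aemeasurable).pow_const q).aestronglyMeasurable
  have hdle : ∀ n x, |f n x - g x| ^ q ≤ 2 * |f n x| ^ q + C₁ * |g x| ^ q := fun n x => by
    have := hC₁' (f n x) (-g x)
    rw [abs_neg, ← sub_eq_add_neg] at this
    linarith
  have hd : ∀ n, Integrable (fun x => |f n x - g x| ^ q) μ := fun n => by
    refine (((hf n).const_mul 2).add (hg.const_mul C₁)).mono' (hdm n) (ae_of_all _ fun x => ?_)
    rw [norm_of_nonneg (by positivity)]
    exact hdle n x
  set K' := 2 * K + C₁ * ∫ x, |g x| ^ q ∂μ with hK'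
  have hdK : ∀ n, ∫ x, |f n x - g x| ^ q ∂μ ≤ K' := fun n => by
    calc ∫ x, |f n x - g x| ^ q ∂μ ≤ ∫ x, (2 * |f n x| ^ q + C₁ * |g x| ^ q) ∂μ :=
          integral_mono (hd n) (((hf n).const_mul 2).add (hg.const_mul C₁)) (hdle n)
      _ = 2 * ∫ x, |f n x| ^ q ∂μ + C₁ * ∫ x, |g x| ^ q ∂μ := by
          rw [integral_add ((hf n).const_mul 2) (hg.const_mul C₁), integral_const_mul,
            integral_const_mul]
      _ ≤ K' := by have := hK n; rw [hK']; linarith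
  have hK'0 : 0 ≤ K' := le_trans (integral_nonneg fun x => by positivity) (hdK 0)
  have hG : ∀ n, Integrable (fun x => |f n x| ^ q - |f n x - g x| ^ q - |g x| ^ q) μ :=
    fun n => ((hf n).sub (hd n)).sub hg
  have hsplit : ∀ n, ∫ x, |f n x| ^ q ∂μ - ∫ x, |f n x - g x| ^ q ∂μ - ∫ x, |g x| ^ q ∂μ
      = ∫ x, (|f n x| ^ q - |f n x - g x| ^ q - |g x| ^ q) ∂μ := fun n => by
    have h := integral_sub ((hf n).sub (hd n)) hg
    simp only [Pi.sub_apply] at h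
    rw [h, integral_sub (hf n) (hd n)]
  rw [Metric.tendsto_atTop]
  intro ε hε
  set η := ε / (2 * (K' + 1)) with hη
  have hη0 : 0 < η := by positivity
  obtain ⟨C, hC, hCb⟩ := exists_abs_abs_add_rpow_sub_le hq hη0
  let W : ℕ → α → ℝ := fun n x =>
    max (|(|f n x| ^ q - |f n x - g x| ^ q - |g x| ^ q)| - η * |f n x - g x| ^ q) 0
  have hWint : ∀ n, Integrable (W n) μ := fun n =>
    ((hG n).abs.sub ((hd n).const_mul η)).pos_part
  have hWle : ∀ n x, ‖W n x‖ ≤ C * |g x| ^ q := fun n x => by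
    rw [norm_of_nonneg (le_max_right _ _)]
    apply max_le _ (by positivity)
    have := hCb (f n x - g x) (g x)
    rw [sub_add_cancel] at this
    linarith
  have hWlim : Tendsto (fun n => ∫ x, W n x ∂μ) atTop (𝓝 (∫ _x, (0 : ℝ) ∂μ)) := by
    refine tendsto_integral_of_dominated_convergence (fun x => C * |g x| ^ q)
      (fun n => (hWint n).aestronglyMeasurable) (hg.const_mul C)
      (fun n => ae_of_all _ (hWle n)) ?_
    filter_upwards [hlim] with x hx
    have h1 : Tendsto (fun n => |f n x| ^ q) atTop (𝓝 (|g x| ^ q)) :=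
      hx.abs.rpow_const (Or.inr hq.le)
    have h2 : Tendsto (fun n => |f n x - g x| ^ q) atTop (𝓝 0) := by
      have := ((hx.sub_const (g x)).abs).rpow_const (p := q) (Or.inr hq.le)
      simpa [zero_rpow hq.ne'] using this
    have h3 := ((((h1.sub h2).sub_const (|g x| ^ q)).abs).sub (h2.const_mul η)).max
      (tendsto_const_nhds (x := (0 : ℝ)))
    simpa using h3
  rw [integral_zero, Metric.tendsto_atTop] at hWlim
  obtain ⟨n₀, hn₀⟩ := hWlim (ε / 2) (by positivity)
  refine ⟨n₀, fun n hn => ?_⟩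
  rw [Real.dist_eq, hsplit]
  have hw := hn₀ n hn
  rw [Real.dist_eq, sub_zero] at hw
  calc |∫ x, (|f n x| ^ q - |f n x - g x| ^ q - |g x| ^ q) ∂μ|
      ≤ ∫ x, |(|f n x| ^ q - |f n x - g x| ^ q - |g x| ^ q)| ∂μ := abs_integral_le_integral_abs
    _ ≤ ∫ x, (W n x + η * |f n x - g x| ^ q) ∂μ := by
        refine integral_mono (hG n).abs ((hWint n).add ((hd n).const_mul η)) fun x => ?_
        have := le_max_left
          (|(|f n x| ^ q - |f n x - g x| ^ q - |g x| ^ q)| - η * |f n x - g x| ^ q) 0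
        simp only [W]
        linarith
    _ = ∫ x, W n x ∂μ + η * ∫ x, |f n x - g x| ^ q ∂μ := by
        rw [integral_add (hWint n) ((hd n).const_mul η), integral_const_mul]
    _ < ε := by
        have h1 : η * ∫ x, |f n x - g x| ^ q ∂μ ≤ η * (K' + 1) := by
          gcongr
          linarith [hdK n]
        have h2 : η * (K' + 1) = ε / 2 := by
          rw [hη]; field_simp
        linarith [le_abs_self (∫ x, W n x ∂μ)]

end BrezisLieb

section Basic

instance isAddHaarMeasure_volume_euc_prod (N : ℕ) :
    (volume : Measure (Euc N × Euc N)).IsAddHaarMeasure :=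
  inferInstanceAs ((volume : Measure (Euc N)).prod (volume : Measure (Euc N))).IsAddHaarMeasure

variable {N : ℕ} {s : ℝ}

lemma two_lt_twoStar (hs0 : 0 < s) (hsN : 2 * s < N) : 2 < twoStar N s := by
  unfold twoStar
  rw [lt_div_iff₀ (by linarith)]
  linarith

lemma half_sub_mul_twoStar (hsN : 2 * s < N) : ((N : ℝ) - 2 * s) / 2 * twoStar N s = N := by
  unfold twoStar
  have : (N : ℝ) - 2 * s ≠ 0 := by linarith
  field_simp

/-- The integral `∫ |u|^{2*_s}`. -/
def critInt (N : ℕ) (s : ℝ) (u : Euc N → ℝ) : ℝ := ∫ x : Euc N, |u x| ^ twoStar N s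

/-- The bilinear form whose quadratic form is `gagSq`. -/
def gagInner (N : ℕ) (s : ℝ) (u v : Euc N → ℝ) : ℝ :=
  ∫ p : Euc N × Euc N, (u p.1 - u p.2) * (v p.1 - v p.2) / dist p.1 p.2 ^ ((N : ℝ) + 2 * s)

/-- The `s`-difference quotient, whose `L²` norm is the Gagliardo seminorm. -/
def diffQuot (N : ℕ) (s : ℝ) (u : Euc N → ℝ) (p : Euc N × Euc N) : ℝ :=
  (u p.1 - u p.2) / dist p.1 p.2 ^ (((N : ℝ) + 2 * s) / 2)

lemma diffQuot_mul (u v : Euc N → ℝ) (p : Euc N × Euc N) :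
    diffQuot N s u p * diffQuot N s v p =
      (u p.1 - u p.2) * (v p.1 - v p.2) / dist p.1 p.2 ^ ((N : ℝ) + 2 * s) := by
  unfold diffQuot
  rw [div_mul_div_comm, ← sq, ← rpow_natCast, ← rpow_mul dist_nonneg]
  congr 2
  push_cast
  ring

lemma diffQuot_sq (u : Euc N → ℝ) (p : Euc N × Euc N) :
    diffQuot N s u p ^ 2 = (u p.1 - u p.2) ^ 2 / dist p.1 p.2 ^ ((N : ℝ) + 2 * s) := by
  rw [sq, diffQuot_mul, ← sq]

lemma measurable_diffQuot {u : Euc N → ℝ} (hu : Measurable u) : Measurable (diffQuot N s u) := by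
  unfold diffQuot
  exact ((hu.comp measurable_fst).sub (hu.comp measurable_snd)).div
    ((measurable_fst.dist measurable_snd).pow_const _)

lemma gagSq_eq (u : Euc N → ℝ) : gagSq N s u = ∫ p, diffQuot N s u p ^ 2 := by
  simp only [gagSq, diffQuot_sq]

lemma gagInner_eq (u v : Euc N → ℝ) :
    gagInner N s u v = ∫ p, diffQuot N s u p * diffQuot N s v p := by
  simp only [gagInner, diffQuot_mul]

lemma gagSq_nonneg (u : Euc N → ℝ) : 0 ≤ gagSq N s u := by
  rw [gagSq_eq]; exact integral_nonneg fun p => sq_nonneg _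

lemma critInt_nonneg (u : Euc N → ℝ) : 0 ≤ critInt N s u :=
  integral_nonneg fun p => by positivity

lemma MemHs.diffQuot_sq {u : Euc N → ℝ} (hu : MemHs N s Set.univ u) :
    Integrable fun p => diffQuot N s u p ^ 2 := by
  simp only [_root_.diffQuot_sq]; exact hu.fin

lemma MemHs.mk' {u : Euc N → ℝ} (hm : Measurable u)
    (hl : Integrable fun x : Euc N => |u x| ^ twoStar N s)
    (hd : Integrable fun p => diffQuot N s u p ^ 2) : MemHs N s Set.univ u := by
  refine ⟨hm, hl, ?_, ae_of_all _ fun x hx => absurd (Set.mem_univ x) hx⟩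
  unfold GagFinite
  simpa only [_root_.diffQuot_sq] using hd

lemma MemHs.integrable_diffQuot_mul {u v : Euc N → ℝ} (hu : MemHs N s Set.univ u)
    (hv : MemHs N s Set.univ v) :
    Integrable fun p => diffQuot N s u p * diffQuot N s v p := by
  refine (hu.diffQuot_sq.add hv.diffQuot_sq).mono'
    ((measurable_diffQuot hu.meas).mul (measurable_diffQuot hv.meas)).aestronglyMeasurable
    (ae_of_all _ fun p => ?_)
  rw [norm_eq_abs, Pi.add_apply, abs_le]
  constructor <;> nlinarith [sq_nonneg (diffQuot N s u p - diffQuot N s v p),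
    sq_nonneg (diffQuot N s u p + diffQuot N s v p), sq_nonneg (diffQuot N s u p),
    sq_nonneg (diffQuot N s v p)]

lemma diffQuot_add (u v : Euc N → ℝ) (p) :
    diffQuot N s (fun x => u x + v x) p = diffQuot N s u p + diffQuot N s v p := by
  unfold diffQuot; ring

lemma diffQuot_const_mul (c : ℝ) (u : Euc N → ℝ) (p) :
    diffQuot N s (fun x => c * u x) p = c * diffQuot N s u p := by
  unfold diffQuot; ring

lemma gagSq_const_mul (c : ℝ) (u : Euc N → ℝ) :
    gagSq N s (fun x => c * u x) = c ^ 2 * gagSq N s u := by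
  simp only [gagSq_eq, diffQuot_const_mul, mul_pow, integral_const_mul]

lemma critInt_const_mul (c : ℝ) (u : Euc N → ℝ) :
    critInt N s (fun x => c * u x) = |c| ^ twoStar N s * critInt N s u := by
  simp only [critInt, abs_mul, mul_rpow (abs_nonneg _) (abs_nonneg _), integral_const_mul]

lemma MemHs.const_mul {u : Euc N → ℝ} (hu : MemHs N s Set.univ u) (c : ℝ) :
    MemHs N s Set.univ fun x => c * u x := by
  refine MemHs.mk' (hu.meas.const_mul c) ?_ ?_
  · simp only [abs_mul, mul_rpow (abs_nonneg _) (abs_nonneg _)]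
    exact hu.lp.const_mul _
  · simp only [diffQuot_const_mul, mul_pow]
    exact hu.diffQuot_sq.const_mul _

lemma MemHs.add (hs0 : 0 < s) (hsN : 2 * s < N) {u v : Euc N → ℝ}
    (hu : MemHs N s Set.univ u) (hv : MemHs N s Set.univ v) :
    MemHs N s Set.univ fun x => u x + v x := by
  have hp := two_lt_twoStar hs0 hsN
  refine MemHs.mk' (hu.meas.add hv.meas) ?_ ?_
  · obtain ⟨C, -, h⟩ := exists_abs_add_rpow_le (q := twoStar N s) (ε := 1) (by linarith) one_pos
    refine ((hu.lp.const_mul (1 + 1)).add (hv.lp.const_mul C)).mono'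
      ((hu.meas.add hv.meas).norm.pow_const _).aestronglyMeasurable (ae_of_all _ fun x => ?_)
    rw [norm_of_nonneg (by positivity)]
    exact h _ _
  · refine ((hu.diffQuot_sq.add ((hu.integrable_diffQuot_mul hv).const_mul 2)).add
      hv.diffQuot_sq).congr (ae_of_all _ fun p => ?_)
    simp only [Pi.add_apply, diffQuot_add]
    ring

lemma MemHs.sub (hs0 : 0 < s) (hsN : 2 * s < N) {u v : Euc N → ℝ}
    (hu : MemHs N s Set.univ u) (hv : MemHs N s Set.univ v) :
    MemHs N s Set.univ fun x => u x - v x := by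
  have := hu.add hs0 hsN (hv.const_mul (-1))
  simpa [← sub_eq_add_neg] using this

lemma gagSq_add {u v : Euc N → ℝ} (hu : MemHs N s Set.univ u) (hv : MemHs N s Set.univ v) :
    gagSq N s (fun x => u x + v x) = gagSq N s u + 2 * gagInner N s u v + gagSq N s v := by
  simp only [gagSq_eq, gagInner_eq, diffQuot_add]
  have h1 := (hu.integrable_diffQuot_mul hv).const_mul 2
  have h2 := integral_add (hu.diffQuot_sq.add h1) hv.diffQuot_sq
  have h3 := integral_add hu.diffQuot_sq h1
  simp only [Pi.add_apply] at h2
  rw [h3, integral_const_mul] at h2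
  rw [← h2]
  congr 1; ext p; ring

lemma gagInner_const_mul (c : ℝ) (u v : Euc N → ℝ) :
    gagInner N s u (fun x => c * v x) = c * gagInner N s u v := by
  simp only [gagInner_eq, diffQuot_const_mul]
  rw [← integral_const_mul]
  congr 1; ext p; ring

lemma MemHs.critInt_pos {u : Euc N → ℝ} (hs0 : 0 < s) (hsN : 2 * s < N)
    (hu : MemHs N s Set.univ u) (h0 : ¬ ∀ᵐ x, u x = 0) : 0 < critInt N s u := by
  refine lt_of_le_of_ne (critInt_nonneg u) fun h => h0 ?_
  have := (integral_eq_zero_iff_of_nonneg (fun x => by positivity) hu.lp).1 h.symm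
  have hp := two_lt_twoStar hs0 hsN
  filter_upwards [this] with x hx
  have hx' : |u x| ^ twoStar N s = 0 := hx
  rw [rpow_eq_zero (abs_nonneg _) (by linarith)] at hx'
  exact abs_eq_zero.1 hx'

lemma not_ae_zero_of_critInt_ne {u : Euc N → ℝ} (hs0 : 0 < s) (hsN : 2 * s < N)
    (h : critInt N s u ≠ 0) : ¬ ∀ᵐ x, u x = 0 := fun h0 => h <| by
  have hp := two_lt_twoStar hs0 hsN
  unfold critInt
  rw [integral_congr_ae (g := fun _ => 0), integral_zero]
  filter_upwards [h0] with x hx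
  rw [hx, abs_zero, zero_rpow (by linarith)]

lemma MemHs.integrable_of_finite {u : Euc N → ℝ} (hs0 : 0 < s) (hsN : 2 * s < N)
    (hu : MemHs N s Set.univ u) (μ : Measure (Euc N)) [IsFiniteMeasure μ]
    (hμ : μ ≤ volume) : Integrable u μ := by
  have hp := two_lt_twoStar hs0 hsN
  refine ((integrable_const 1).add (hu.lp.mono_measure hμ)).mono'
    hu.meas.aestronglyMeasurable (ae_of_all _ fun x => ?_)
  rw [norm_eq_abs, Pi.add_apply]
  rcases le_or_gt |u x| 1 with h | h
  · exact h.trans (le_add_of_nonneg_right (by positivity))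
  · have := rpow_le_rpow_of_exponent_le h.le (by linarith : 1 ≤ twoStar N s)
    rw [rpow_one] at this
    linarith

lemma MemHs.integrableOn_ball {u : Euc N → ℝ} (hs0 : 0 < s) (hsN : 2 * s < N)
    (hu : MemHs N s Set.univ u) (x : Euc N) (r : ℝ) : IntegrableOn u (Metric.ball x r) :=
  have : IsFiniteMeasure (volume.restrict (Metric.ball x r)) :=
    ⟨by simpa using measure_ball_lt_top⟩
  hu.integrable_of_finite hs0 hsN _ Measure.restrict_le_self

/-- The translation and dilation `x ↦ r^{(N-2s)/2} u(ξ + r x)`, which preserves both norms. -/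
def rescale (N : ℕ) (s : ℝ) (ξ : Euc N) (r : ℝ) (u : Euc N → ℝ) (x : Euc N) : ℝ :=
  r ^ (((N : ℝ) - 2 * s) / 2) * u (ξ + r • x)

variable {ξ : Euc N} {r : ℝ}

lemma abs_rescale_rpow (hsN : 2 * s < N) (hr : 0 < r) (u : Euc N → ℝ) (x : Euc N) :
    |rescale N s ξ r u x| ^ twoStar N s = r ^ N * |u (ξ + r • x)| ^ twoStar N s := by
  unfold rescale
  rw [abs_mul, mul_rpow (abs_nonneg _) (abs_nonneg _), abs_of_pos (by positivity),
    ← rpow_mul hr.le, half_sub_mul_twoStar hsN, rpow_natCast]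

lemma diffQuot_rescale_sq (hr : 0 < r) (u : Euc N → ℝ) (p : Euc N × Euc N) :
    diffQuot N s (rescale N s ξ r u) p ^ 2 =
      r ^ (2 * N) * diffQuot N s u ((ξ, ξ) + r • p) ^ 2 := by
  have hd : dist (ξ + r • p.1) (ξ + r • p.2) = r * dist p.1 p.2 := by
    rw [dist_add_left, dist_smul₀, norm_of_nonneg hr.le]
  have e : r ^ (2 * N) * (r ^ ((N : ℝ) + 2 * s))⁻¹ = (r ^ (((N : ℝ) - 2 * s) / 2)) ^ 2 := by
    rw [← rpow_natCast r (2 * N), ← rpow_natCast _ 2, ← rpow_mul hr.le, ← rpow_neg hr.le,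
      ← rpow_add hr]
    congr 1; push_cast; ring
  simp only [diffQuot_sq, Prod.fst_add, Prod.snd_add, Prod.smul_fst, Prod.smul_snd, hd, rescale]
  rw [mul_rpow hr.le dist_nonneg, ← mul_sub, mul_pow, ← e]
  field_simp

lemma MemHs.rescale (hsN : 2 * s < N) (hr : 0 < r) {u : Euc N → ℝ}
    (hu : MemHs N s Set.univ u) (ξ : Euc N) : MemHs N s Set.univ (rescale N s ξ r u) := by
  refine MemHs.mk' ?_ ?_ ?_
  · have : Measurable fun x : Euc N => ξ + r • x := by fun_prop
    exact (hu.meas.comp this).const_mul _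
  · simp only [abs_rescale_rpow hsN hr]
    refine Integrable.const_mul ?_ _
    exact (hu.lp.comp_add_left ξ).comp_smul hr.ne'
  · simp only [diffQuot_rescale_sq hr]
    refine Integrable.const_mul ?_ _
    exact (hu.diffQuot_sq.comp_add_left (ξ, ξ)).comp_smul hr.ne'

lemma critInt_rescale (hsN : 2 * s < N) (hr : 0 < r) (u : Euc N → ℝ) :
    critInt N s (rescale N s ξ r u) = critInt N s u := by
  simp only [critInt, abs_rescale_rpow hsN hr]
  rw [integral_const_mul, Measure.integral_comp_smul volume
    (fun x : Euc N => |u (ξ + x)| ^ twoStar N s) r,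
    integral_add_left_eq_self (fun x : Euc N => |u x| ^ twoStar N s), smul_eq_mul,
    finrank_euclideanSpace_fin, abs_of_pos (by positivity), ← mul_assoc,
    mul_inv_cancel₀ (by positivity), one_mul]

lemma gagSq_rescale (hr : 0 < r) (u : Euc N → ℝ) :
    gagSq N s (rescale N s ξ r u) = gagSq N s u := by
  simp only [gagSq_eq, diffQuot_rescale_sq hr]
  rw [integral_const_mul, Measure.integral_comp_smul volume
    (fun p : Euc N × Euc N => diffQuot N s u ((ξ, ξ) + p) ^ 2) r,
    integral_add_left_eq_self (fun p : Euc N × Euc N => diffQuot N s u p ^ 2), smul_eq_mul,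
    Module.finrank_prod, finrank_euclideanSpace_fin, abs_of_pos (by positivity), ← mul_assoc,
    ← two_mul, mul_inv_cancel₀ (by positivity), one_mul]

lemma setIntegral_abs_rescale (hr : 0 < r) (u : Euc N → ℝ) (z : Euc N) :
    ∫ x in Metric.ball z 1, |rescale N s ξ r u x| =
      r ^ (-(((N : ℝ) + 2 * s) / 2)) * ∫ x in Metric.ball (ξ + r • z) r, |u x| := by
  have h1 : ∀ x, (Metric.ball z 1).indicator (fun x => |rescale N s ξ r u x|) x =
      r ^ (((N : ℝ) - 2 * s) / 2) *
        ((Metric.ball (ξ + r • z) r).indicator (fun x => |u x|) (ξ + r • x)) := fun x => by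
    have hmem : ξ + r • x ∈ Metric.ball (ξ + r • z) r ↔ x ∈ Metric.ball z 1 := by
      rw [Metric.mem_ball, Metric.mem_ball, dist_add_left, dist_smul₀, norm_of_nonneg hr.le]
      exact ⟨fun h => by nlinarith, fun h => by nlinarith⟩
    by_cases hx : x ∈ Metric.ball z 1
    · rw [Set.indicator_of_mem hx, Set.indicator_of_mem (hmem.2 hx), rescale, abs_mul,
        abs_of_pos (by positivity)]
    · rw [Set.indicator_of_notMem hx, Set.indicator_of_notMem (fun h => hx (hmem.1 h)), mul_zero]
  rw [← integral_indicator measurableSet_ball, ← integral_indicator measurableSet_ball]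
  simp only [h1]
  rw [integral_const_mul, Measure.integral_comp_smul volume
    (fun x : Euc N => (Metric.ball (ξ + r • z) r).indicator (fun x => |u x|) (ξ + x)) r,
    integral_add_left_eq_self (fun x : Euc N =>
      (Metric.ball (ξ + r • z) r).indicator (fun x => |u x|) x), smul_eq_mul,
    finrank_euclideanSpace_fin, abs_of_pos (by positivity), ← mul_assoc]
  congr 1
  rw [← rpow_natCast r N, ← rpow_neg hr.le, ← rpow_add hr]
  congr 1; ring

end Basic

section Sobolev

variable {N : ℕ} {s : ℝ}

lemma integral_abs_rpow_le {α : Type*} [MeasurableSpace α] {μ : Measure α} [IsFiniteMeasure μ]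
    {q : ℝ} (hq : 1 ≤ q) {f : α → ℝ} (hf : Integrable f μ)
    (hfq : Integrable (fun x => |f x| ^ q) μ) :
    (∫ x, |f x| ∂μ) ^ q ≤ μ.real Set.univ ^ (q - 1) * ∫ x, |f x| ^ q ∂μ := by
  rcases eq_zero_or_neZero μ with rfl | h
  · simp [zero_rpow (by linarith : q ≠ 0)]
  have hV : 0 < μ.real Set.univ := by
    rw [measureReal_def]
    exact ENNReal.toReal_pos (by simpa using h.ne) (measure_ne_top _ _)
  have := (convexOn_rpow hq).map_average_le (μ := μ) (f := fun x => |f x|)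
    (continuousOn_id.rpow_const fun x _ => Or.inr (by linarith)) isClosed_Ici
    (ae_of_all _ fun x => abs_nonneg (f x)) hf.abs hfq
  simp only [average_eq, smul_eq_mul] at this
  rw [mul_rpow (by positivity) (integral_nonneg fun x => abs_nonneg _),
    inv_rpow hV.le, ← div_eq_inv_mul, ← div_eq_inv_mul, div_le_div_iff₀ (by positivity) hV] at this
  rw [rpow_sub_one hV.ne', div_mul_eq_mul_div, le_div_iff₀ hV]
  linarith

/-- Volume of the unit ball. -/
def unitVol (N : ℕ) : ℝ := (volume : Measure (Euc N)).real (Metric.ball 0 1)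

lemma unitVol_pos (N : ℕ) : 0 < unitVol N :=
  ENNReal.toReal_pos (Metric.measure_ball_pos _ _ one_pos).ne' measure_ball_lt_top.ne

lemma volume_real_ball (c : Euc N) {r : ℝ} (hr : 0 < r) :
    (volume : Measure (Euc N)).real (Metric.ball c r) = unitVol N * r ^ N := by
  rw [unitVol, measureReal_def, Measure.addHaar_ball_of_pos _ _ hr, ENNReal.toReal_mul,
    ENNReal.toReal_ofReal (by positivity), finrank_euclideanSpace_fin, mul_comm, measureReal_def]

lemma isFiniteMeasure_restrict_euc_ball (c : Euc N) (r : ℝ) :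
    IsFiniteMeasure ((volume : Measure (Euc N)).restrict (Metric.ball c r)) :=
  ⟨by simpa using measure_ball_lt_top⟩

lemma MemHs.setIntegral_ball_rpow_le (hs0 : 0 < s) (hsN : 2 * s < N) {u : Euc N → ℝ}
    (hu : MemHs N s Set.univ u) (c : Euc N) {r : ℝ} (hr : 0 < r) :
    (∫ x in Metric.ball c r, |u x|) ^ twoStar N s ≤
      (unitVol N * r ^ N) ^ (twoStar N s - 1) * ∫ x in Metric.ball c r, |u x| ^ twoStar N s := by
  have hp := two_lt_twoStar hs0 hsN
  have := isFiniteMeasure_restrict_euc_ball c r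
  have := integral_abs_rpow_le (q := twoStar N s) (by linarith)
    (hu.integrableOn_ball hs0 hsN c r) hu.lp.integrableOn
  rwa [measureReal_restrict_apply_univ, volume_real_ball c hr] at this

/-- `∫ |u(x) - u(y)|² / |x - y|^{N+2s} dy`. -/
def sliceGag (N : ℕ) (s : ℝ) (u : Euc N → ℝ) (x : Euc N) : ℝ :=
  ∫ y, diffQuot N s u (x, y) ^ 2

lemma sliceGag_nonneg (u : Euc N → ℝ) (x : Euc N) : 0 ≤ sliceGag N s u x :=
  integral_nonneg fun _ => sq_nonneg _

lemma MemHs.integrable_sliceGag {u : Euc N → ℝ} (hu : MemHs N s Set.univ u) :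
    Integrable (sliceGag N s u) :=
  Integrable.integral_prod_left (μ := volume) (ν := volume) hu.diffQuot_sq

lemma MemHs.integral_sliceGag {u : Euc N → ℝ} (hu : MemHs N s Set.univ u) :
    ∫ x, sliceGag N s u x = gagSq N s u := by
  rw [gagSq_eq]
  exact (integral_prod (μ := volume) (ν := volume) _ hu.diffQuot_sq).symm

lemma MemHs.ae_integrable_slice {u : Euc N → ℝ} (hu : MemHs N s Set.univ u) :
    ∀ᵐ x, Integrable fun y => diffQuot N s u (x, y) ^ 2 :=
  Integrable.prod_right_ae (μ := volume) (ν := volume) hu.diffQuot_sq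

/-- Constant in the oscillation estimate. -/
def oscConst (N : ℕ) (s : ℝ) : ℝ := √(unitVol N * 2 ^ ((N : ℝ) + 2 * s))

lemma setIntegral_abs_sub_le (hs0 : 0 < s) {u : Euc N → ℝ} (hm : Measurable u) {x c : Euc N}
    {r : ℝ} (hr : 0 < r) (hxc : dist x c < r)
    (hx : Integrable fun y => diffQuot N s u (x, y) ^ 2)
    (hu : IntegrableOn u (Metric.ball c r)) :
    ∫ y in Metric.ball c r, |u x - u y| ≤
      oscConst N s * r ^ ((N : ℝ) + s) * √(sliceGag N s u x) := by
  have := isFiniteMeasure_restrict_euc_ball c r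
  have hpt : ∀ y ∈ Metric.ball c r, |u x - u y| ^ (2 : ℝ) ≤
      (2 * r) ^ ((N : ℝ) + 2 * s) * diffQuot N s u (x, y) ^ 2 := fun y hy => by
    have hd : dist x y ≤ 2 * r := by
      have := dist_triangle_right x y c
      rw [Metric.mem_ball] at hy
      linarith
    rw [rpow_two, sq_abs, _root_.diffQuot_sq]
    rcases eq_or_ne x y with rfl | hxy
    · simp
    have h0 : 0 < dist x y := dist_pos.2 hxy
    rw [mul_div_assoc', le_div_iff₀ (by positivity), mul_comm]
    gcongr
  have hI : IntegrableOn (fun y => (2 * r) ^ ((N : ℝ) + 2 * s) * diffQuot N s u (x, y) ^ 2)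
      (Metric.ball c r) := (hx.const_mul _).integrableOn
  have hI2 : IntegrableOn (fun y => |u x - u y| ^ (2 : ℝ)) (Metric.ball c r) := by
    refine hI.mono' ((hm.const_sub (u x)).norm.pow_const _).aestronglyMeasurable ?_
    filter_upwards [ae_restrict_mem measurableSet_ball] with y hy
    rw [norm_of_nonneg (by positivity)]
    exact hpt y hy
  have h1 := integral_abs_rpow_le (μ := volume.restrict (Metric.ball c r)) (q := 2)
    (f := fun y => u x - u y) one_le_two ((integrable_const _).sub hu) hI2
  have h2 : ∫ y in Metric.ball c r, |u x - u y| ^ (2 : ℝ) ≤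
      (2 * r) ^ ((N : ℝ) + 2 * s) * sliceGag N s u x := by
    calc _ ≤ ∫ y in Metric.ball c r, (2 * r) ^ ((N : ℝ) + 2 * s) * diffQuot N s u (x, y) ^ 2 :=
          setIntegral_mono_on hI2 hI measurableSet_ball hpt
      _ ≤ ∫ y, (2 * r) ^ ((N : ℝ) + 2 * s) * diffQuot N s u (x, y) ^ 2 :=
          setIntegral_le_integral (hx.const_mul _) (ae_of_all _ fun y => by positivity)
      _ = _ := by rw [integral_const_mul]; rfl
  rw [measureReal_restrict_apply_univ, volume_real_ball c hr] at h1
  have hω := unitVol_pos N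
  refine le_of_sq_le_sq ?_ (by unfold oscConst; positivity)
  rw [mul_pow, mul_pow, sq_sqrt (sliceGag_nonneg _ _), oscConst, sq_sqrt (by positivity),
    ← rpow_two]
  refine h1.trans ?_
  calc _ ≤ (unitVol N * r ^ N) ^ ((2 : ℝ) - 1) *
        ((2 * r) ^ ((N : ℝ) + 2 * s) * sliceGag N s u x) := by gcongr
    _ = _ := by
      have e : (r ^ ((N : ℝ) + s)) ^ 2 = r ^ N * r ^ ((N : ℝ) + 2 * s) := by
        rw [← rpow_natCast _ 2, ← rpow_mul hr.le, ← rpow_natCast r N, ← rpow_add hr]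
        congr 1; push_cast; ring
      rw [e, mul_rpow two_pos.le hr.le]
      norm_num
      ring

lemma rpow_twoStar_le_of_forall (hs0 : 0 < s) (hsN : 2 * s < N) {K M a d ω : ℝ}
    (hω : 0 < ω) (hK : 0 ≤ K) (hM : 0 < M) (ha : 0 ≤ a) (hd : 0 ≤ d)
    (h : ∀ r : ℝ, 0 < r → ω * a ≤ K * r ^ s * d + M * r ^ (s - (N : ℝ) / 2)) :
    a ^ twoStar N s ≤ ((K + 1) / ω) ^ twoStar N s * M ^ (twoStar N s - 2) * d ^ 2 := by
  have hp := two_lt_twoStar hs0 hsN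
  have hN : (0 : ℝ) < N := by linarith
  have hNs : (N : ℝ) - 2 * s ≠ 0 := by linarith
  rcases hd.eq_or_lt with rfl | hd
  · have hlim : Tendsto (fun r : ℝ => M * r ^ (s - (N : ℝ) / 2)) atTop (𝓝 (M * 0)) := by
      refine Tendsto.const_mul _ ?_
      have := tendsto_rpow_neg_atTop (y := (N : ℝ) / 2 - s) (by linarith)
      simpa using this
    have : ω * a ≤ M * 0 := by
      refine ge_of_tendsto hlim ?_
      filter_upwards [eventually_gt_atTop 0] with r hr
      simpa using h r hr
    have ha0 : a = 0 := by nlinarith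
    rw [ha0, zero_rpow (by linarith)]
    simp
  · have hr : 0 < (M / d) ^ (2 / (N : ℝ)) := by positivity
    have h1 := h _ hr
    have e1 : K * ((M / d) ^ (2 / (N : ℝ))) ^ s * d =
        K * (M ^ (2 * s / N) * d ^ (1 - 2 * s / N)) := by
      rw [← rpow_mul (by positivity), div_rpow hM.le hd.le, rpow_sub hd, rpow_one]
      rw [show 2 / (N : ℝ) * s = 2 * s / N by ring]
      field_simp
    have e2 : M * ((M / d) ^ (2 / (N : ℝ))) ^ (s - (N : ℝ) / 2) =
        M ^ (2 * s / N) * d ^ (1 - 2 * s / N) := by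
      rw [← rpow_mul (by positivity),
        show 2 / (N : ℝ) * (s - N / 2) = 2 * s / N - 1 by field_simp,
        div_rpow hM.le hd.le, rpow_sub hM, rpow_one, rpow_sub hd, rpow_sub hd, rpow_one]
      field_simp
    rw [e1, e2] at h1
    have h2 : a ≤ (K + 1) / ω * (M ^ (2 * s / N) * d ^ (1 - 2 * s / N)) := by
      rw [div_mul_eq_mul_div, le_div_iff₀ hω]
      linarith
    refine (rpow_le_rpow ha h2 (by linarith)).trans (le_of_eq ?_)
    rw [mul_rpow (by positivity) (by positivity), mul_rpow (by positivity) (by positivity),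
      ← rpow_mul hM.le, ← rpow_mul hd.le, ← rpow_two, mul_assoc]
    have e3 : 2 * s / N * twoStar N s = twoStar N s - 2 := by
      unfold twoStar; field_simp; ring
    have e4 : (1 - 2 * s / N) * twoStar N s = 2 := by
      unfold twoStar; field_simp
    rw [e3, e4]

/-- Sobolev inequality refined by a Morrey-type bound on the averages over balls. -/
lemma exists_critInt_le_of_ball_bound (hs0 : 0 < s) (hsN : 2 * s < N) :
    ∃ C : ℝ, 0 < C ∧ ∀ (u : Euc N → ℝ) (M : ℝ), MemHs N s Set.univ u → 0 < M →
      (∀ (c : Euc N) (r : ℝ), 0 < r →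
        ∫ x in Metric.ball c r, |u x| ≤ M * r ^ (((N : ℝ) + 2 * s) / 2)) →
      critInt N s u ≤ C * M ^ (twoStar N s - 2) * gagSq N s u := by
  have hω := unitVol_pos N
  have hK : 0 ≤ oscConst N s := sqrt_nonneg _
  refine ⟨((oscConst N s + 1) / unitVol N) ^ twoStar N s, by positivity,
    fun u M hu hM hball => ?_⟩
  rw [← hu.integral_sliceGag, ← integral_const_mul]
  refine integral_mono_ae hu.lp (hu.integrable_sliceGag.const_mul _) ?_
  filter_upwards [hu.ae_integrable_slice] with x hx
  have := rpow_twoStar_le_of_forall hs0 hsN hω hK hM (abs_nonneg (u x))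
    (sqrt_nonneg (sliceGag N s u x)) (fun r hr => ?_)
  · rwa [sq_sqrt (sliceGag_nonneg _ _)] at this
  have := isFiniteMeasure_restrict_euc_ball x r
  have hui := hu.integrableOn_ball hs0 hsN x r
  have h1 : unitVol N * r ^ N * |u x| ≤
      (∫ y in Metric.ball x r, |u x - u y|) + ∫ y in Metric.ball x r, |u y| := by
    have hc : ∫ _y in Metric.ball x r, |u x| = unitVol N * r ^ N * |u x| := by
      rw [setIntegral_const, volume_real_ball x hr, smul_eq_mul]
    have hsub : Integrable (fun y => |u x - u y|) (volume.restrict (Metric.ball x r)) :=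
      ((integrable_const _).sub hui).abs
    rw [← hc, ← integral_add hsub hui.abs]
    refine integral_mono (integrable_const _)
      (hsub.add hui.abs) fun y => ?_
    have := abs_add_le (u x - u y) (u y)
    simpa using this
  have h2 := setIntegral_abs_sub_le hs0 hu.meas hr (c := x) (by simpa using hr) hx hui
  have h3 := hball x r hr
  have hrN : 0 < r ^ N := by positivity
  have e1 : r ^ ((N : ℝ) + s) = r ^ N * r ^ s := by rw [rpow_add hr, rpow_natCast]
  have e2 : r ^ (((N : ℝ) + 2 * s) / 2) = r ^ N * r ^ (s - (N : ℝ) / 2) := by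
    rw [← rpow_natCast, ← rpow_add hr]; congr 1; ring
  rw [e1] at h2
  rw [e2] at h3
  refine le_of_mul_le_mul_left ?_ hrN
  calc r ^ N * (unitVol N * |u x|) = unitVol N * r ^ N * |u x| := by ring
    _ ≤ _ := h1
    _ ≤ _ := add_le_add h2 h3
    _ = _ := by ring

/-- Fractional Sobolev inequality. -/
lemma exists_sobolev (hs0 : 0 < s) (hsN : 2 * s < N) :
    ∃ C : ℝ, 0 < C ∧ ∀ u : Euc N → ℝ, MemHs N s Set.univ u →
      critInt N s u ^ (2 / twoStar N s) ≤ C * gagSq N s u := by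
  obtain ⟨C, hC, h⟩ := exists_critInt_le_of_ball_bound hs0 hsN
  have hp := two_lt_twoStar hs0 hsN
  have hω := unitVol_pos N
  set p := twoStar N s with hpdef
  refine ⟨C * (unitVol N ^ ((p - 1) / p)) ^ (p - 2), by positivity, fun u hu => ?_⟩
  rcases (critInt_nonneg (s := s) u).eq_or_lt with h0 | h0
  · rw [← h0, zero_rpow (by positivity)]
    exact mul_nonneg (by positivity) (gagSq_nonneg u)
  set B := critInt N s u with hB
  have hM : 0 < unitVol N ^ ((p - 1) / p) * B ^ (1 / p) := by positivity
  have h1 := h u _ hu hM fun c r hr => by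
    have h2 := hu.setIntegral_ball_rpow_le hs0 hsN c hr
    have h3 : ∫ x in Metric.ball c r, |u x| ^ p ≤ B :=
      setIntegral_le_integral hu.lp (ae_of_all _ fun x => by positivity)
    have h4 : (∫ x in Metric.ball c r, |u x|) ^ p ≤ (unitVol N * r ^ N) ^ (p - 1) * B :=
      h2.trans (by gcongr)
    have hI : 0 ≤ ∫ x in Metric.ball c r, |u x| := integral_nonneg fun x => abs_nonneg _
    have h5 := rpow_le_rpow (by positivity) h4 (z := 1 / p) (by positivity)
    rw [← rpow_mul hI, mul_one_div_cancel (by linarith), rpow_one] at h5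
    refine h5.trans (le_of_eq ?_)
    have e : (r ^ N) ^ ((p - 1) / p) = r ^ (((N : ℝ) + 2 * s) / 2) := by
      rw [← rpow_natCast, ← rpow_mul hr.le]
      congr 1
      have := half_sub_mul_twoStar hsN
      rw [← hpdef] at this
      rw [mul_div_assoc', div_eq_iff (by linarith)]
      linarith
    rw [mul_rpow (by positivity) h0.le, ← rpow_mul (by positivity),
      mul_rpow hω.le (by positivity), show (p - 1) * (1 / p) = (p - 1) / p by ring, e]
    ring
  rw [mul_rpow (by positivity) (by positivity), ← rpow_mul h0.le] at h1
  have hpos : 0 < B ^ (1 / p * (p - 2)) := by positivity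
  have e : B ^ (2 / p) * B ^ (1 / p * (p - 2)) = B := by
    rw [← rpow_add h0]
    have : 2 / p + 1 / p * (p - 2) = 1 := by
      have : p ≠ 0 := by linarith
      field_simp; ring
    rw [this, rpow_one]
  refine le_of_mul_le_mul_right ?_ hpos
  rw [e]
  linarith

end Sobolev

section LocalCompactness

lemma exists_subseq_tendsto_pi {ι : Type*} [Countable ι] {a : ℕ → ι → ℝ} {b : ι → ℝ}
    (h : ∀ n i, |a n i| ≤ b i) :
    ∃ φ : ℕ → ℕ, StrictMono φ ∧ ∃ l : ι → ℝ, ∀ i, Tendsto (fun n => a (φ n) i) atTop (𝓝 (l i)) := by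
  have hK : IsCompact (Set.pi Set.univ fun i => Set.Icc (-b i) (b i)) :=
    isCompact_univ_pi fun i => isCompact_Icc
  obtain ⟨l, -, φ, hφ, hl⟩ := hK.tendsto_subseq (x := a) fun n i _ => abs_le.1 (h n i)
  exact ⟨φ, hφ, l, fun i => (tendsto_pi_nhds.1 hl i)⟩

lemma exists_tendsto_of_cauchy_integral {α : Type*} [MeasurableSpace α] {ν : Measure α}
    {v : ℕ → α → ℝ} (hv : ∀ n, Integrable (v n) ν)
    (hc : ∀ ε : ℝ, 0 < ε → ∃ n₀, ∀ n ≥ n₀, ∀ m ≥ n₀, ∫ x, |v n x - v m x| ∂ν < ε) :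
    ∃ g : α → ℝ, Integrable g ν ∧ Tendsto (fun n => ∫ x, |v n x - g x| ∂ν) atTop (𝓝 0) ∧
      ∃ ψ : ℕ → ℕ, StrictMono ψ ∧ ∀ᵐ x ∂ν, Tendsto (fun n => v (ψ n) x) atTop (𝓝 (g x)) := by
  let V : ℕ → α →₁[ν] ℝ := fun n => (hv n).toL1 (v n)
  have hcoe : ∀ n, (V n : α → ℝ) =ᵐ[ν] v n := fun n => (hv n).coeFn_toL1
  have hdist : ∀ (n : ℕ) (f : α →₁[ν] ℝ), dist (V n) f = ∫ x, |v n x - f x| ∂ν := fun n f => by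
    rw [L1.dist_eq_integral_dist]
    refine integral_congr_ae ?_
    filter_upwards [hcoe n] with x hx
    rw [hx, Real.dist_eq]
  have hV : CauchySeq V := by
    rw [Metric.cauchySeq_iff]
    intro ε hε
    obtain ⟨n₀, h⟩ := hc ε hε
    refine ⟨n₀, fun n hn m hm => ?_⟩
    rw [hdist]
    refine lt_of_eq_of_lt (integral_congr_ae ?_) (h n hn m hm)
    filter_upwards [hcoe m] with x hx
    rw [hx]
  obtain ⟨g, hg⟩ := cauchySeq_tendsto_of_complete hV
  refine ⟨g, L1.integrable_coeFn g, ?_, ?_⟩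
  · have := tendsto_iff_dist_tendsto_zero.1 hg
    simpa only [hdist] using this
  · obtain ⟨ψ, hψ, hlim⟩ := (tendstoInMeasure_of_tendsto_Lp hg).exists_seq_tendsto_ae
    refine ⟨ψ, hψ, ?_⟩
    filter_upwards [hlim, ae_all_iff.2 fun n => hcoe (ψ n)] with x hx hx'
    simpa only [hx'] using hx

variable {N : ℕ} {s : ℝ}

/-- An integrable weight bounded by one. -/
def weight (N : ℕ) (x : Euc N) : ℝ := (1 + ‖x‖) ^ (-((N : ℝ) + 1))

lemma weight_pos (x : Euc N) : 0 < weight N x := by unfold weight; positivity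

lemma weight_le_one (x : Euc N) : weight N x ≤ 1 :=
  rpow_le_one_of_one_le_of_nonpos (by linarith [norm_nonneg x])
    (by linarith [(Nat.cast_nonneg N : (0 : ℝ) ≤ N)])

lemma continuous_weight : Continuous (weight N) :=
  (continuous_const.add continuous_norm).rpow_const fun x =>
    Or.inl (by linarith [norm_nonneg x] : (0 : ℝ) < 1 + ‖x‖).ne'

lemma integrable_weight : Integrable (weight N) :=
  integrable_one_add_norm (by rw [finrank_euclideanSpace_fin]; linarith)

/-- A finite measure equivalent to, and bounded by, Lebesgue measure. -/
def weightMeasure (N : ℕ) : Measure (Euc N) :=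
  volume.withDensity fun x => ENNReal.ofReal (weight N x)

instance isFiniteMeasure_weightMeasure : IsFiniteMeasure (weightMeasure N) :=
  isFiniteMeasure_withDensity_ofReal integrable_weight.2

lemma weightMeasure_le : weightMeasure N ≤ volume := by
  conv_rhs => rw [← withDensity_one (μ := (volume : Measure (Euc N)))]
  refine withDensity_mono (ae_of_all _ fun x => ?_)
  simpa using weight_le_one x

lemma measurable_ofReal_weight : Measurable fun x => ENNReal.ofReal (weight N x) :=
  continuous_weight.measurable.ennreal_ofReal

lemma volume_absolutelyContinuous_weightMeasure :
    (volume : Measure (Euc N)) ≪ weightMeasure N :=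
  withDensity_absolutelyContinuous' measurable_ofReal_weight.aemeasurable
    (ae_of_all _ fun x => by simpa using weight_pos x)

lemma setIntegral_ball_le_weightMeasure {f : Euc N → ℝ} (hf : Integrable f (weightMeasure N))
    (h0 : ∀ x, 0 ≤ f x) {R : ℝ} (hR : 0 ≤ R) :
    ∫ x in Metric.ball 0 R, f x ≤ (1 + R) ^ ((N : ℝ) + 1) * ∫ x, f x ∂weightMeasure N := by
  have hw : ∫ x, f x ∂weightMeasure N = ∫ x, weight N x * f x := by
    rw [weightMeasure, integral_withDensity_eq_integral_toReal_smul measurable_ofReal_weight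
      (ae_of_all _ fun x => ENNReal.ofReal_lt_top)]
    simp [ENNReal.toReal_ofReal (weight_pos _).le]
  have hi : Integrable fun x => weight N x * f x := by
    have := (integrable_withDensity_iff_integrable_smul' measurable_ofReal_weight
      (ae_of_all _ fun x => ENNReal.ofReal_lt_top)).1 hf
    simpa [ENNReal.toReal_ofReal (weight_pos _).le] using this
  have hle : ∀ x ∈ Metric.ball (0 : Euc N) R,
      f x ≤ (1 + R) ^ ((N : ℝ) + 1) * (weight N x * f x) := fun x hx => by
    rw [mem_ball_zero_iff] at hx
    have : 1 ≤ (1 + R) ^ ((N : ℝ) + 1) * weight N x := by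
      have h1 : (0 : ℝ) < 1 + ‖x‖ := by positivity
      rw [weight, rpow_neg h1.le, ← div_eq_mul_inv, one_le_div (by positivity)]
      gcongr
    nlinarith [h0 x]
  rw [hw, ← integral_const_mul]
  refine le_trans ?_ (setIntegral_le_integral (s := Metric.ball 0 R) (hi.const_mul _)
    (ae_of_all _ fun x => mul_nonneg (by positivity) (mul_nonneg (weight_pos x).le (h0 x))))
  refine integral_mono_of_nonneg (ae_of_all _ h0) (hi.const_mul _).integrableOn ?_
  filter_upwards [ae_restrict_mem measurableSet_ball] with x hx using hle x hx

/-- Index of a point of the dense sequence within distance `r` of `x`. -/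
def nearIndex (N : ℕ) {r : ℝ} (hr : 0 < r) (x : Euc N) : ℕ := by
  classical
  exact Nat.find (p := fun j => dist x (TopologicalSpace.denseSeq (Euc N) j) < r)
    ((TopologicalSpace.denseRange_denseSeq (Euc N)).exists_dist_lt x hr)

lemma dist_nearIndex {r : ℝ} (hr : 0 < r) (x : Euc N) :
    dist x (TopologicalSpace.denseSeq (Euc N) (nearIndex N hr x)) < r := by
  classical
  exact Nat.find_spec (p := fun j => dist x (TopologicalSpace.denseSeq (Euc N) j) < r) _

lemma measurable_nearIndex {r : ℝ} (hr : 0 < r) : Measurable (nearIndex N hr) := by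
  classical
  exact measurable_find _ fun k => measurableSet_lt (measurable_id.dist measurable_const)
    measurable_const

lemma MemHs.abs_sub_average_le (hs0 : 0 < s) (hsN : 2 * s < N) {u : Euc N → ℝ}
    (hu : MemHs N s Set.univ u) {r : ℝ} (hr : 0 < r) {x c : Euc N} (hxc : dist x c < r)
    (hx : Integrable fun y => diffQuot N s u (x, y) ^ 2) :
    |u x - (unitVol N * r ^ N)⁻¹ * ∫ y in Metric.ball c r, u y| ≤
      oscConst N s / unitVol N * r ^ s * (1 + sliceGag N s u x) := by
  have := isFiniteMeasure_restrict_euc_ball c r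
  have hω := unitVol_pos N
  have hV : 0 < unitVol N * r ^ N := by positivity
  have hui := hu.integrableOn_ball hs0 hsN c r
  have h1 := setIntegral_abs_sub_le hs0 hu.meas hr hxc hx hui
  have hD := sliceGag_nonneg (s := s) u x
  have hsq : √(sliceGag N s u x) ≤ 1 + sliceGag N s u x := by
    rw [sqrt_le_left (by linarith)]
    nlinarith
  have e : u x - (unitVol N * r ^ N)⁻¹ * ∫ y in Metric.ball c r, u y =
      (unitVol N * r ^ N)⁻¹ * ∫ y in Metric.ball c r, (u x - u y) := by
    rw [integral_sub (integrable_const _) hui, setIntegral_const, volume_real_ball c hr,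
      smul_eq_mul]
    field_simp
  rw [e, abs_mul, abs_of_pos (by positivity), inv_mul_le_iff₀ hV]
  have hK : 0 ≤ oscConst N s := sqrt_nonneg _
  calc |∫ y in Metric.ball c r, (u x - u y)| ≤ ∫ y in Metric.ball c r, |u x - u y| :=
        abs_integral_le_integral_abs
    _ ≤ oscConst N s * r ^ ((N : ℝ) + s) * √(sliceGag N s u x) := h1
    _ ≤ oscConst N s * r ^ ((N : ℝ) + s) * (1 + sliceGag N s u x) := by gcongr
    _ = _ := by rw [rpow_add hr, rpow_natCast]; field_simp

lemma MemHs.abs_setIntegral_ball_le (hs0 : 0 < s) (hsN : 2 * s < N) {u : Euc N → ℝ} {B : ℝ}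
    (hu : MemHs N s Set.univ u) (hB : critInt N s u ≤ B) (c : Euc N) {r : ℝ} (hr : 0 < r) :
    |∫ x in Metric.ball c r, u x| ≤
      ((unitVol N * r ^ N) ^ (twoStar N s - 1) * B) ^ (1 / twoStar N s) := by
  have hp := two_lt_twoStar hs0 hsN
  have hω := unitVol_pos N
  refine abs_integral_le_integral_abs.trans ?_
  have h1 := hu.setIntegral_ball_rpow_le hs0 hsN c hr
  have h2 : ∫ x in Metric.ball c r, |u x| ^ twoStar N s ≤ B :=
    (setIntegral_le_integral hu.lp (ae_of_all _ fun x => by positivity)).trans hB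
  have hI : 0 ≤ ∫ x in Metric.ball c r, |u x| := integral_nonneg fun x => abs_nonneg _
  have h5 := rpow_le_rpow (by positivity) (h1.trans (mul_le_mul_of_nonneg_left h2 (by positivity)))
    (z := 1 / twoStar N s) (by positivity)
  rwa [← rpow_mul hI, mul_one_div_cancel (by linarith), rpow_one] at h5

lemma measurable_comp_nearIndex {r : ℝ} (hr : 0 < r) (q : ℕ → ℝ) :
    Measurable fun x => q (nearIndex N hr x) :=
  (measurable_of_countable q).comp (measurable_nearIndex hr)

lemma integrable_comp_nearIndex {r b : ℝ} (hr : 0 < r) {q : ℕ → ℝ} (hq : ∀ j, |q j| ≤ b) :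
    Integrable (fun x => q (nearIndex N hr x)) (weightMeasure N) :=
  (integrable_const b).mono' (measurable_comp_nearIndex hr q).aestronglyMeasurable
    (ae_of_all _ fun _ => hq _)

lemma MemHs.integrable_weightMeasure (hs0 : 0 < s) (hsN : 2 * s < N) {u : Euc N → ℝ}
    (hu : MemHs N s Set.univ u) : Integrable u (weightMeasure N) :=
  hu.integrable_of_finite hs0 hsN _ weightMeasure_le

lemma MemHs.integral_abs_sub_near_le (hs0 : 0 < s) (hsN : 2 * s < N) {u : Euc N → ℝ}
    (hu : MemHs N s Set.univ u) {r b : ℝ} (hr : 0 < r) {a l : ℕ → ℝ} (hl : ∀ j, |l j| ≤ b)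
    (hab : ∀ j, |a j| ≤ b)
    (ha : ∀ j, a j = ∫ x in Metric.ball (TopologicalSpace.denseSeq (Euc N) j) r, u x) :
    ∫ x, |u x - (unitVol N * r ^ N)⁻¹ * l (nearIndex N hr x)| ∂weightMeasure N ≤
      oscConst N s / unitVol N * r ^ s * ((weightMeasure N).real Set.univ + gagSq N s u) +
      (unitVol N * r ^ N)⁻¹ *
        ∫ x, |a (nearIndex N hr x) - l (nearIndex N hr x)| ∂weightMeasure N := by
  have hω := unitVol_pos N
  have hV : 0 < unitVol N * r ^ N := by positivity
  have hK : 0 ≤ oscConst N s := sqrt_nonneg _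
  have hDi : Integrable (sliceGag N s u) (weightMeasure N) :=
    hu.integrable_sliceGag.mono_measure weightMeasure_le
  have hDle : ∫ x, sliceGag N s u x ∂weightMeasure N ≤ gagSq N s u := by
    rw [← hu.integral_sliceGag]
    exact integral_mono_measure weightMeasure_le (ae_of_all _ fun x => sliceGag_nonneg _ _)
      hu.integrable_sliceGag
  have hi1 : Integrable (fun x => oscConst N s / unitVol N * r ^ s * (1 + sliceGag N s u x))
      (weightMeasure N) := ((integrable_const 1).add hDi).const_mul _
  have hi2 : Integrable (fun x => (unitVol N * r ^ N)⁻¹ *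
      |a (nearIndex N hr x) - l (nearIndex N hr x)|) (weightMeasure N) :=
    ((integrable_comp_nearIndex hr hab).sub (integrable_comp_nearIndex hr hl)).abs.const_mul _
  have hi3 : Integrable (fun x => |u x - (unitVol N * r ^ N)⁻¹ * l (nearIndex N hr x)|)
      (weightMeasure N) := ((hu.integrable_weightMeasure hs0 hsN).sub
        ((integrable_comp_nearIndex hr hl).const_mul _)).abs
  calc ∫ x, |u x - (unitVol N * r ^ N)⁻¹ * l (nearIndex N hr x)| ∂weightMeasure N
      ≤ ∫ x, (oscConst N s / unitVol N * r ^ s * (1 + sliceGag N s u x) +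
        (unitVol N * r ^ N)⁻¹ * |a (nearIndex N hr x) - l (nearIndex N hr x)|)
          ∂weightMeasure N := by
        refine integral_mono_ae hi3 (hi1.add hi2) ?_
        filter_upwards [ae_mono weightMeasure_le hu.ae_integrable_slice] with x hx
        have h1 := hu.abs_sub_average_le hs0 hsN hr (dist_nearIndex hr x) hx
        rw [← ha] at h1
        have h2 := abs_sub_le (u x) ((unitVol N * r ^ N)⁻¹ * a (nearIndex N hr x))
          ((unitVol N * r ^ N)⁻¹ * l (nearIndex N hr x))
        rw [← mul_sub, abs_mul, abs_of_pos (inv_pos.2 hV)] at h2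
        exact h2.trans (add_le_add_left h1 _)
    _ = oscConst N s / unitVol N * r ^ s *
          ((weightMeasure N).real Set.univ + ∫ x, sliceGag N s u x ∂weightMeasure N) +
        (unitVol N * r ^ N)⁻¹ *
          ∫ x, |a (nearIndex N hr x) - l (nearIndex N hr x)| ∂weightMeasure N := by
        rw [integral_add hi1 hi2, integral_const_mul, integral_const_mul,
          integral_add (integrable_const _) hDi]
        simp
    _ ≤ _ := by gcongr

/-- A bounded sequence is precompact in `L¹` of the weighted measure. -/
lemma exists_subseq_cauchy_weightMeasure (hs0 : 0 < s) (hsN : 2 * s < N) {u : ℕ → Euc N → ℝ}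
    {A B : ℝ} (hu : ∀ n, MemHs N s Set.univ (u n)) (hA : ∀ n, gagSq N s (u n) ≤ A)
    (hB : ∀ n, critInt N s (u n) ≤ B) :
    ∃ φ : ℕ → ℕ, StrictMono φ ∧ ∀ ε : ℝ, 0 < ε → ∃ n₀, ∀ n ≥ n₀, ∀ m ≥ n₀,
      ∫ x, |u (φ n) x - u (φ m) x| ∂weightMeasure N < ε := by
  obtain ⟨ρ, hρ⟩ : ∃ ρ : ℕ → ℝ, ρ = fun k : ℕ => 1 / ((k : ℝ) + 1) := ⟨_, rfl⟩
  have hρ0 : ∀ k, 0 < ρ k := fun k => by rw [hρ]; positivity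
  obtain ⟨b, hb⟩ : ∃ b : ℕ → ℝ, ∀ n (i : ℕ × ℕ),
      |∫ x in Metric.ball (TopologicalSpace.denseSeq (Euc N) i.2) (ρ i.1), u n x| ≤ b i.1 :=
    ⟨fun k => ((unitVol N * ρ k ^ N) ^ (twoStar N s - 1) * B) ^ (1 / twoStar N s),
      fun n i => (hu n).abs_setIntegral_ball_le hs0 hsN (hB n) _ (hρ0 _)⟩
  obtain ⟨a, ha⟩ : ∃ a : ℕ → ℕ × ℕ → ℝ, ∀ n (i : ℕ × ℕ), a n i =
      ∫ x in Metric.ball (TopologicalSpace.denseSeq (Euc N) i.2) (ρ i.1), u n x :=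
    ⟨_, fun _ _ => rfl⟩
  have hab : ∀ n (i : ℕ × ℕ), |a n i| ≤ b i.1 := fun n i => by rw [ha]; exact hb n i
  obtain ⟨φ, hφ, l, hl⟩ := exists_subseq_tendsto_pi (b := fun i : ℕ × ℕ => b i.1) hab
  have hlb : ∀ i : ℕ × ℕ, |l i| ≤ b i.1 := fun i =>
    le_of_tendsto (hl i).abs (Eventually.of_forall fun n => hab _ _)
  refine ⟨φ, hφ, fun ε hε => ?_⟩
  have hlim : ∀ k, Tendsto (fun n => ∫ x, |a (φ n) (k, nearIndex N (hρ0 k) x) -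
      l (k, nearIndex N (hρ0 k) x)| ∂weightMeasure N) atTop (𝓝 0) := fun k => by
    rw [← integral_zero (Euc N) ℝ (μ := weightMeasure N)]
    refine tendsto_integral_of_dominated_convergence (fun _ => b k + b k)
      (fun n => ((measurable_comp_nearIndex (hρ0 k) fun j => a (φ n) (k, j)).sub
        (measurable_comp_nearIndex (hρ0 k) fun j => l (k, j))).norm.aestronglyMeasurable)
      (integrable_const _) (fun n => ae_of_all _ fun x => ?_) (ae_of_all _ fun x => ?_)
    · rw [norm_eq_abs, abs_abs]
      exact (abs_sub _ _).trans (add_le_add (hab _ _) (hlb _))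
    · have := ((hl (k, nearIndex N (hρ0 k) x)).sub_const (l (k, nearIndex N (hρ0 k) x))).abs
      simpa using this
  have hρlim : Tendsto (fun k => oscConst N s / unitVol N * ρ k ^ s *
      ((weightMeasure N).real Set.univ + A)) atTop (𝓝 0) := by
    have h0 : Tendsto (fun k => ρ k ^ s) atTop (𝓝 0) := by
      have := tendsto_one_div_add_atTop_nhds_zero_nat (𝕜 := ℝ)
      rw [hρ]
      simpa [zero_rpow hs0.ne'] using this.rpow_const (p := s) (Or.inr hs0.le)
    simpa using (h0.const_mul (oscConst N s / unitVol N)).mul_const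
      ((weightMeasure N).real Set.univ + A)
  obtain ⟨k, hk⟩ := (hρlim.eventually (gt_mem_nhds (show 0 < ε / 4 by positivity))).exists
  have h1 := (hlim k).const_mul (unitVol N * ρ k ^ N)⁻¹
  rw [mul_zero] at h1
  obtain ⟨n₀, hn₀⟩ := eventually_atTop.1
    (h1.eventually (gt_mem_nhds (show 0 < ε / 4 by positivity)))
  obtain ⟨h, hh⟩ : ∃ h : Euc N → ℝ, h = fun x =>
    (unitVol N * ρ k ^ N)⁻¹ * l (k, nearIndex N (hρ0 k) x) := ⟨_, rfl⟩
  have hhi : Integrable h (weightMeasure N) := by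
    rw [hh]
    exact (integrable_comp_nearIndex (hρ0 k) (b := b k) (q := fun j => l (k, j))
      fun j => hlb (k, j)).const_mul _
  have hω := unitVol_pos N
  have hK : 0 ≤ oscConst N s := sqrt_nonneg _
  have hclose : ∀ n ≥ n₀, ∫ x, |u (φ n) x - h x| ∂weightMeasure N < ε / 4 + ε / 4 :=
    fun n hn => by
      have h2 := (hu (φ n)).integral_abs_sub_near_le hs0 hsN (hρ0 k) (b := b k)
        (a := fun j => a (φ n) (k, j)) (l := fun j => l (k, j)) (fun j => hlb (k, j))
        (fun j => hab _ _) (fun j => ha _ _)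
      rw [hh]
      refine h2.trans_lt (add_lt_add (lt_of_le_of_lt ?_ hk) (hn₀ n hn))
      have := hρ0 k
      have := hA (φ n)
      gcongr
  refine ⟨n₀, fun n hn m hm => ?_⟩
  have hui : ∀ n, Integrable (u n) (weightMeasure N) := fun n =>
    (hu n).integrable_weightMeasure hs0 hsN
  have hin : ∀ n, Integrable (fun x => |u (φ n) x - h x|) (weightMeasure N) := fun n =>
    ((hui (φ n)).sub hhi).abs
  have hnm : Integrable (fun x => |u (φ n) x - u (φ m) x|) (weightMeasure N) :=
    ((hui (φ n)).sub (hui (φ m))).abs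
  calc ∫ x, |u (φ n) x - u (φ m) x| ∂weightMeasure N
      ≤ ∫ x, (|u (φ n) x - h x| + |u (φ m) x - h x|) ∂weightMeasure N := by
        refine integral_mono hnm ((hin n).add (hin m)) fun x => ?_
        have := abs_sub_le (u (φ n) x) (h x) (u (φ m) x)
        rwa [abs_sub_comm (h x)] at this
    _ = ∫ x, |u (φ n) x - h x| ∂weightMeasure N + ∫ x, |u (φ m) x - h x| ∂weightMeasure N :=
        integral_add (hin n) (hin m)
    _ < ε := by linarith [hclose n hn, hclose m hm]

/-- Local compactness of the embedding of `Ḣ^s`. -/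
lemma exists_subseq_tendsto_ae (hs0 : 0 < s) (hsN : 2 * s < N) {u : ℕ → Euc N → ℝ} {A B : ℝ}
    (hu : ∀ n, MemHs N s Set.univ (u n)) (hA : ∀ n, gagSq N s (u n) ≤ A)
    (hB : ∀ n, critInt N s (u n) ≤ B) :
    ∃ φ : ℕ → ℕ, StrictMono φ ∧ ∃ g : Euc N → ℝ,
      (∀ᵐ x, Tendsto (fun n => u (φ n) x) atTop (𝓝 (g x))) ∧
      ∀ R c : ℝ, 0 ≤ R → 0 < c → (∀ n, c ≤ ∫ x in Metric.ball 0 R, |u n x|) →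
        ¬ ∀ᵐ x, g x = 0 := by
  obtain ⟨φ, hφ, hc⟩ := exists_subseq_cauchy_weightMeasure hs0 hsN hu hA hB
  have hui : ∀ n, Integrable (u n) (weightMeasure N) := fun n =>
    (hu n).integrable_weightMeasure hs0 hsN
  obtain ⟨g, hgi, hgL, ψ, hψ, hgae⟩ := exists_tendsto_of_cauchy_integral
    (v := fun n => u (φ n)) (fun n => hui _) hc
  refine ⟨φ ∘ ψ, hφ.comp hψ, g, volume_absolutelyContinuous_weightMeasure.ae_le hgae,
    fun R c hR hc hcn hg0 => ?_⟩
  have hg0' : ∀ᵐ x ∂weightMeasure N, g x = 0 := ae_mono weightMeasure_le hg0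
  have h1 : Tendsto (fun n => (1 + R) ^ ((N : ℝ) + 1) * ∫ x, |u (φ n) x| ∂weightMeasure N) atTop
      (𝓝 ((1 + R) ^ ((N : ℝ) + 1) * 0)) := by
    refine Tendsto.const_mul _ (hgL.congr fun n => integral_congr_ae ?_)
    filter_upwards [hg0'] with x hx
    rw [hx, sub_zero]
  rw [mul_zero] at h1
  have := ge_of_tendsto h1 (Eventually.of_forall fun n =>
    (hcn (φ n)).trans (setIntegral_ball_le_weightMeasure (hui _).abs (fun x => abs_nonneg _) hR))
  linarith

end LocalCompactness

section Symmetry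

variable {N : ℕ} {s : ℝ} {G : Subgroup (ONgrp N)} {σ : G →* ℤˣ}

lemma ogAct_one (x : Euc N) : ogAct (1 : ONgrp N) x = x := by
  ext i
  simp [ogAct]

lemma ogAct_mul (g h : ONgrp N) (x : Euc N) : ogAct (g * h) x = ogAct g (ogAct h x) := by
  ext i
  simp [ogAct, Matrix.mulVec_mulVec]

lemma norm_ogAct (g : ONgrp N) (x : Euc N) : ‖ogAct g x‖ = ‖x‖ := by
  have h1 : ‖ogAct g x‖ ^ 2 = ‖x‖ ^ 2 := by
    rw [← real_inner_self_eq_norm_sq, ← real_inner_self_eq_norm_sq, ogAct,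
      ← LinearMap.adjoint_inner_left, ← Matrix.toEuclideanLin_conjTranspose_eq_adjoint,
      ← Matrix.star_eq_conjTranspose]
    congr 1
    ext i
    have := Matrix.UnitaryGroup.star_mul_self g
    simp [Matrix.mulVec_mulVec, this]
  exact (sq_eq_sq₀ (norm_nonneg _) (norm_nonneg _)).1 h1

/-- The action of an orthogonal matrix as a linear isometric equivalence. -/
def ogIso (g : ONgrp N) : Euc N ≃ₗᵢ[ℝ] Euc N where
  toFun := ogAct g
  invFun := ogAct g⁻¹
  map_add' x y := by simp [ogAct]
  map_smul' c x := by simp [ogAct]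
  left_inv x := by rw [← ogAct_mul, inv_mul_cancel, ogAct_one]
  right_inv x := by rw [← ogAct_mul, mul_inv_cancel, ogAct_one]
  norm_map' := norm_ogAct g

lemma ogIso_apply (g : ONgrp N) (x : Euc N) : ogIso g x = ogAct g x := rfl

lemma ogAct_add (g : ONgrp N) (x y : Euc N) : ogAct g (x + y) = ogAct g x + ogAct g y :=
  (ogIso g).map_add x y

lemma ogAct_smul (g : ONgrp N) (c : ℝ) (x : Euc N) : ogAct g (c • x) = c • ogAct g x :=
  (ogIso g).map_smul c x

lemma dist_ogAct (g : ONgrp N) (x y : Euc N) : dist (ogAct g x) (ogAct g y) = dist x y :=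
  (ogIso g).dist_map x y

lemma measurePreserving_ogAct (g : ONgrp N) : MeasurePreserving (ogAct g) :=
  (ogIso g).measurePreserving

lemma measurableEmbedding_ogAct (g : ONgrp N) : MeasurableEmbedding (ogAct g) :=
  (ogIso g).toHomeomorph.measurableEmbedding

lemma abs_intUnits (ε : ℤˣ) : |((ε : ℤ) : ℝ)| = 1 := by
  rcases Int.units_eq_one_or ε with h | h <;> simp [h]

lemma IsEquivariant.abs_eq {u : Euc N → ℝ} (hu : IsEquivariant G σ u) (g : G) (x : Euc N) :
    |u (ogAct (g : ONgrp N) x)| = |u x| := by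
  rw [hu g x, abs_mul, abs_intUnits, one_mul]

lemma IsEquivariant.setIntegral_ball {u : Euc N → ℝ} (hu : IsEquivariant G σ u) (g : G)
    (x : Euc N) (r p : ℝ) :
    ∫ y in Metric.ball (ogAct (g : ONgrp N) x) r, |u y| ^ p =
      ∫ y in Metric.ball x r, |u y| ^ p := by
  rw [← (measurePreserving_ogAct (g : ONgrp N)).setIntegral_preimage_emb
    (measurableEmbedding_ogAct _)]
  have : ogAct (g : ONgrp N) ⁻¹' Metric.ball (ogAct (g : ONgrp N) x) r = Metric.ball x r := by
    ext y
    simp [dist_ogAct]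
  simp_rw [this, hu.abs_eq]

/-- The subspace of points fixed by `G`. -/
def fixedSpace (G : Subgroup (ONgrp N)) : Submodule ℝ (Euc N) where
  carrier := {x | ∀ g : G, ogAct (g : ONgrp N) x = x}
  add_mem' hx hy g := by rw [ogAct_add, hx g, hy g]
  zero_mem' g := (ogIso (g : ONgrp N)).map_zero
  smul_mem' c x hx g := by rw [ogAct_smul, hx g]

lemma IsEquivariant.rescale {u : Euc N → ℝ} (hu : IsEquivariant G σ u) {ξ : Euc N}
    (hξ : ξ ∈ fixedSpace G) (r : ℝ) : IsEquivariant G σ (rescale N s ξ r u) := fun g x => by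
  have h : ξ + r • ogAct (g : ONgrp N) x = ogAct (g : ONgrp N) (ξ + r • x) := by
    rw [ogAct_add, ogAct_smul, hξ g]
  rw [_root_.rescale, _root_.rescale, h, hu g]
  ring

lemma exists_separated_near (hG1 : CondG1 G) (k : ℕ) {z : Euc N} (hz : z ∉ fixedSpace G) :
    ∃ δ > 0, ∃ g : Fin k → G, ∀ y ∈ Metric.ball z δ, ∀ i j, i ≠ j →
      δ ≤ dist (ogAct (g i : ONgrp N) y) (ogAct (g j : ONgrp N) y) := by
  have hinf := (hG1 z).resolve_right hz
  obtain ⟨t, ht, htc⟩ := hinf.exists_subset_card_eq k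
  obtain ⟨e⟩ : Nonempty (Fin k ≃ t) := ⟨(t.equivFinOfCardEq htc).symm⟩
  choose g hg using fun i => ht (e i).2
  have hne : ∀ i j, i ≠ j → ogAct (g i : ONgrp N) z ≠ ogAct (g j : ONgrp N) z :=
    fun i j hij h => hij (e.injective (Subtype.ext (by rw [← hg i, ← hg j, h])))
  obtain ⟨d, hd0, hd⟩ : ∃ d > 0, ∀ i j, i ≠ j →
      d ≤ dist (ogAct (g i : ONgrp N) z) (ogAct (g j : ONgrp N) z) := by
    have h0 : ∀ᶠ d in 𝓝[>] (0 : ℝ), ∀ i j, i ≠ j →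
        d ≤ dist (ogAct (g i : ONgrp N) z) (ogAct (g j : ONgrp N) z) := by
      refine eventually_all.2 fun i => eventually_all.2 fun j => ?_
      by_cases hij : i = j
      · exact Eventually.of_forall fun d h => absurd hij h
      · filter_upwards [mem_nhdsWithin_of_mem_nhds (ge_mem_nhds (dist_pos.2 (hne i j hij)))]
          with d hd _ using hd
    exact (Eventually.and (eventually_mem_nhdsWithin (s := Set.Ioi (0 : ℝ))) h0).exists
  refine ⟨d / 3, by positivity, g, fun y hy i j hij => ?_⟩
  have h1 := hd i j hij
  have h2 := dist_triangle4 (ogAct (g i : ONgrp N) z) (ogAct (g i : ONgrp N) y)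
    (ogAct (g j : ONgrp N) y) (ogAct (g j : ONgrp N) z)
  rw [dist_ogAct, dist_ogAct, dist_comm z] at h2
  rw [Metric.mem_ball] at hy
  linarith

lemma exists_separated (hG1 : CondG1 G) (k : ℕ) :
    ∃ R : ℝ, 0 < R ∧ ∀ z ∈ (fixedSpace G)ᗮ, R ≤ ‖z‖ → ∃ g : Fin k → G, ∀ i j, i ≠ j →
      2 ≤ dist (ogAct (g i : ONgrp N) z) (ogAct (g j : ONgrp N) z) := by
  have hK : IsCompact (Metric.sphere (0 : Euc N) 1 ∩ ((fixedSpace G)ᗮ : Set (Euc N))) :=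
    (isCompact_sphere _ _).inter_right (Submodule.isClosed_orthogonal _)
  obtain ⟨δ, hδ, h⟩ : ∃ δ : ℝ, 0 < δ ∧
      ∀ z ∈ Metric.sphere (0 : Euc N) 1 ∩ ((fixedSpace G)ᗮ : Set (Euc N)),
      ∃ g : Fin k → G, ∀ i j, i ≠ j →
        δ ≤ dist (ogAct (g i : ONgrp N) z) (ogAct (g j : ONgrp N) z) := by
    refine hK.induction_on (p := fun S => ∃ δ : ℝ, 0 < δ ∧ ∀ z ∈ S, ∃ g : Fin k → G,
      ∀ i j, i ≠ j → δ ≤ dist (ogAct (g i : ONgrp N) z) (ogAct (g j : ONgrp N) z))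
      ⟨1, one_pos, by simp⟩ ?_ ?_ ?_
    · rintro S T hST ⟨δ, hδ, h⟩
      exact ⟨δ, hδ, fun z hz => h z (hST hz)⟩
    · rintro S T ⟨δ, hδ, h⟩ ⟨δ', hδ', h'⟩
      refine ⟨min δ δ', lt_min hδ hδ', fun z hz => ?_⟩
      rcases hz with hz | hz
      · obtain ⟨g, hg⟩ := h z hz
        exact ⟨g, fun i j hij => (min_le_left _ _).trans (hg i j hij)⟩
      · obtain ⟨g, hg⟩ := h' z hz
        exact ⟨g, fun i j hij => (min_le_right _ _).trans (hg i j hij)⟩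
    · rintro z ⟨hz1, hz⟩
      have hzG : z ∉ fixedSpace G := fun hzG => by
        have h0 : z = 0 := by
          have := Submodule.inner_right_of_mem_orthogonal hzG hz
          exact inner_self_eq_zero.1 this
        simp [h0] at hz1
      obtain ⟨δ, hδ, g, hg⟩ := exists_separated_near hG1 k hzG
      exact ⟨_, mem_nhdsWithin_of_mem_nhds (Metric.ball_mem_nhds z hδ), δ, hδ,
        fun y hy => ⟨g, hg y hy⟩⟩
  refine ⟨2 / δ, by positivity, fun z hz hR => ?_⟩
  have hz0 : 0 < ‖z‖ := lt_of_lt_of_le (by positivity) hR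
  obtain ⟨g, hg⟩ := h (‖z‖⁻¹ • z) ⟨by simp [norm_smul, hz0.ne'],
    Submodule.smul_mem _ _ hz⟩
  refine ⟨g, fun i j hij => ?_⟩
  have h1 := hg i j hij
  rw [ogAct_smul, ogAct_smul, dist_smul₀, norm_inv, norm_norm] at h1
  rw [div_le_iff₀ hδ] at hR
  rw [inv_mul_eq_div, le_div_iff₀ hz0] at h1
  linarith

/-- Symmetry confines concentration of equivariant functions to a bounded distance from the
fixed space. -/
lemma exists_concentration_radius (hs0 : 0 < s) (hsN : 2 * s < N) (hG1 : CondG1 G) {M : ℝ}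
    (hM : 0 < M) : ∃ R : ℝ, 0 < R ∧ ∀ u : Euc N → ℝ, MemHs N s Set.univ u →
      IsEquivariant G σ u → critInt N s u ≤ 1 → ∀ z ∈ (fixedSpace G)ᗮ,
      M ≤ ∫ x in Metric.ball z 1, |u x| → ‖z‖ ≤ R := by
  have hp := two_lt_twoStar hs0 hsN
  have hω := unitVol_pos N
  obtain ⟨k, hk⟩ := exists_nat_gt (unitVol N ^ (twoStar N s - 1) / M ^ twoStar N s)
  obtain ⟨R, hR, h⟩ := exists_separated hG1 k
  refine ⟨R, hR, fun u hu hσu hu1 z hz hMz => ?_⟩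
  by_contra! hRz
  obtain ⟨g, hg⟩ := h z hz hRz.le
  have h1 := hu.setIntegral_ball_rpow_le hs0 hsN z one_pos
  rw [one_pow, mul_one] at h1
  have h2 : ∑ i, ∫ x in Metric.ball (ogAct (g i : ONgrp N) z) 1, |u x| ^ twoStar N s ≤ 1 := by
    rw [← integral_iUnion_fintype (fun i => measurableSet_ball) (fun i j hij =>
      Metric.ball_disjoint_ball (by linarith [hg i j hij])) fun i => hu.lp.integrableOn]
    exact (setIntegral_le_integral hu.lp (ae_of_all _ fun x => by positivity)).trans hu1
  simp only [hσu.setIntegral_ball, Finset.sum_const, Finset.card_univ, Fintype.card_fin,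
    nsmul_eq_mul] at h2
  have h3 : M ^ twoStar N s ≤
      unitVol N ^ (twoStar N s - 1) * ∫ x in Metric.ball z 1, |u x| ^ twoStar N s :=
    (rpow_le_rpow hM.le hMz (by linarith)).trans h1
  rw [div_lt_iff₀ (by positivity)] at hk
  have hk0 : (0 : ℝ) ≤ k := k.cast_nonneg
  have hV : 0 < unitVol N ^ (twoStar N s - 1) := by positivity
  nlinarith [mul_le_mul_of_nonneg_left h3 hk0, mul_le_mul_of_nonneg_left h2 hV.le]

end Symmetry

section Nonempty

variable {N : ℕ} {s : ℝ}

lemma integrable_min_div_norm_rpow (hs0 : 0 < s) (hs1 : s < 1) (hsN : 2 * s < N) :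
    Integrable fun z : Euc N => min (‖z‖ ^ 2) 1 / ‖z‖ ^ ((N : ℝ) + 2 * s) := by
  have hN : 0 < N := by
    have : (0 : ℝ) < N := by linarith
    exact_mod_cast this
  have : NeZero N := ⟨hN.ne'⟩
  have hN1 : ((N - 1 : ℕ) : ℝ) = (N : ℝ) - 1 := by
    rw [Nat.cast_sub hN, Nat.cast_one]
  refine (integrable_fun_norm_addHaar (volume : Measure (Euc N))
    (f := fun y : ℝ => min (y ^ 2) 1 / y ^ ((N : ℝ) + 2 * s))).2 ?_
  rw [finrank_euclideanSpace_fin, ← Set.Ioc_union_Ioi_eq_Ioi (zero_le_one (α := ℝ))]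
  refine IntegrableOn.union ?_ ?_
  · have h1 : IntegrableOn (fun y : ℝ => y ^ (1 - 2 * s)) (Set.Ioc 0 1) :=
      (intervalIntegrable_iff_integrableOn_Ioc_of_le zero_le_one).1
        (intervalIntegral.intervalIntegrable_rpow' (by linarith))
    refine h1.congr_fun (fun y hy => ?_) measurableSet_Ioc
    have hy0 : 0 < y := hy.1
    have h2 : min (y ^ 2) 1 = y ^ 2 := min_eq_left (pow_le_one₀ hy0.le hy.2)
    simp only [smul_eq_mul, h2]
    rw [← rpow_natCast, ← rpow_natCast, hN1, ← rpow_sub hy0, ← rpow_add hy0]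
    congr 1
    push_cast
    ring
  · have h1 : IntegrableOn (fun y : ℝ => y ^ (-1 - 2 * s)) (Set.Ioi 1) :=
      integrableOn_Ioi_rpow_of_lt (by linarith) one_pos
    refine h1.congr_fun (fun y hy => ?_) measurableSet_Ioi
    have hy1 : 1 < y := hy
    have hy0 : 0 < y := one_pos.trans hy1
    have h2 : min (y ^ 2) 1 = 1 := min_eq_right (one_le_pow₀ hy1.le)
    simp only [smul_eq_mul, h2]
    rw [← rpow_natCast, hN1, one_div, ← rpow_neg hy0.le, ← rpow_add hy0]
    congr 1
    ring

lemma memHs_of_lipschitz (hs0 : 0 < s) (hs1 : s < 1) (hsN : 2 * s < N) {u : Euc N → ℝ}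
    {C R : ℝ} (hu : ∀ x y, |u x - u y| ≤ C * dist x y) (hb : ∀ x y, |u x - u y| ≤ C)
    (hR : ∀ x, R < ‖x‖ → u x = 0) : MemHs N s Set.univ u := by
  have hp := two_lt_twoStar hs0 hsN
  have hcont : Continuous u :=
    (LipschitzWith.of_dist_le_mul (K := C.toNNReal) fun x y =>
      (hu x y).trans (mul_le_mul_of_nonneg_right (le_coe_toNNReal C) dist_nonneg)).continuous
  have hC : 0 ≤ C := (abs_nonneg _).trans (hb 0 0)
  refine MemHs.mk' hcont.measurable ?_ ?_
  · refine Continuous.integrable_of_hasCompactSupport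
      (hcont.abs.rpow_const fun x => Or.inr (by linarith))
      (HasCompactSupport.intro (isCompact_closedBall (0 : Euc N) R) fun x hx => ?_)
    rw [hR x (by simpa using hx), abs_zero, zero_rpow (by linarith)]
  · have hk := integrable_min_div_norm_rpow hs0 hs1 hsN
    have hB : Integrable (Set.indicator (Metric.closedBall (0 : Euc N) R) fun _ => (1 : ℝ)) :=
      (integrable_indicator_iff measurableSet_closedBall).2
        (integrableOn_const measure_closedBall_lt_top.ne)
    have h1 := (measurePreserving_prod_sub
      (volume : Measure (Euc N)) volume).integrable_comp_of_integrable
      (hB.mul_prod hk)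
    have h2 := (measurePreserving_prod_sub_swap (volume : Measure (Euc N))
      volume).integrable_comp_of_integrable (hB.mul_prod hk)
    refine ((h1.add h2).const_mul (C ^ 2)).mono'
      ((measurable_diffQuot hcont.measurable).pow_const 2).aestronglyMeasurable
      (ae_of_all _ fun p => ?_)
    obtain ⟨x, y⟩ := p
    have h3 : (u x - u y) ^ 2 ≤ C ^ 2 * min (dist x y ^ 2) 1 := by
      rw [mul_min_of_nonneg _ _ (sq_nonneg C), ← mul_pow, mul_one, ← sq_abs (u x - u y)]
      exact le_min (pow_le_pow_left₀ (abs_nonneg _) (hu x y) 2)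
        (pow_le_pow_left₀ (abs_nonneg _) (hb x y) 2)
    have hd : (0 : ℝ) ≤ dist x y ^ ((N : ℝ) + 2 * s) := by positivity
    have hmin : (0 : ℝ) ≤ min (dist x y ^ 2) 1 := le_min (sq_nonneg _) zero_le_one
    have h4 : (u x - u y) ^ 2 / dist x y ^ ((N : ℝ) + 2 * s) ≤
        C ^ 2 * (min (dist x y ^ 2) 1 / dist x y ^ ((N : ℝ) + 2 * s)) := by
      rw [← mul_div_assoc]
      gcongr
    have hq : 0 ≤ min (dist x y ^ 2) 1 / dist x y ^ ((N : ℝ) + 2 * s) := by positivity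
    rw [norm_of_nonneg (sq_nonneg _), diffQuot_sq]
    simp only [Pi.add_apply, Function.comp_apply, ← dist_eq_norm]
    rw [dist_comm y x]
    by_cases hx : x ∈ Metric.closedBall (0 : Euc N) R
    · rw [Set.indicator_of_mem hx, one_mul]
      refine h4.trans (mul_le_mul_of_nonneg_left (le_add_of_nonneg_right ?_) (sq_nonneg C))
      exact mul_nonneg (Set.indicator_nonneg (fun _ _ => zero_le_one) _) hq
    · by_cases hy : y ∈ Metric.closedBall (0 : Euc N) R
      · rw [Set.indicator_of_mem hy, one_mul]
        refine h4.trans (mul_le_mul_of_nonneg_left (le_add_of_nonneg_left ?_) (sq_nonneg C))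
        exact mul_nonneg (Set.indicator_nonneg (fun _ _ => zero_le_one) _) hq
      · rw [Set.indicator_of_notMem hx, Set.indicator_of_notMem hy,
          hR x (by simpa using hx), hR y (by simpa using hy)]
        simp

lemma compactSpace_orthogonalGroup (N : ℕ) : CompactSpace (ONgrp N) := by
  refine isCompact_iff_compactSpace.1 ?_
  have h1 : IsCompact (Set.pi Set.univ fun _ : Fin N => Set.pi Set.univ fun _ : Fin N =>
      Metric.closedBall (0 : ℝ) 1) :=
    isCompact_univ_pi fun _ => isCompact_univ_pi fun _ => isCompact_closedBall _ _
  refine h1.of_isClosed_subset ?_ fun A hA i _ j _ => ?_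
  · have : (Matrix.orthogonalGroup (Fin N) ℝ : Set (Matrix (Fin N) (Fin N) ℝ)) =
        {A | star A * A = 1} := by
      ext A
      exact Matrix.mem_unitaryGroup_iff'
    rw [this]
    exact isClosed_eq (by fun_prop) continuous_const
  · simpa using entry_norm_bound_of_unitary hA i j

lemma continuous_ogAct : Continuous fun p : ONgrp N × Euc N => ogAct p.1 p.2 := by
  refine (PiLp.continuous_toLp 2 _).comp (continuous_pi fun i => ?_)
  have h : ∀ j, Continuous fun p : ONgrp N × Euc N =>
      (p.1 : Matrix (Fin N) (Fin N) ℝ) i j * p.2 j := fun j =>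
    ((continuous_subtype_val.comp continuous_fst).matrix_elem i j).mul
      ((PiLp.continuous_apply 2 _ j).comp continuous_snd)
  exact continuous_finsetSum Finset.univ fun j _ => h j

variable {G : Subgroup (ONgrp N)} {σ : G →* ℤˣ}

/-- The part of the orbit of `ξ` on which the sign is `ε`. -/
def signedOrbit (σ : G →* ℤˣ) (ξ : Euc N) (ε : ℤˣ) : Set (Euc N) :=
  {y | ∃ g : G, σ g = ε ∧ ogAct (g : ONgrp N) ξ = y}

lemma isCompact_signedOrbit (hGc : IsClosed (G : Set (ONgrp N))) (hσ : Continuous σ) (ξ : Euc N)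
    (ε : ℤˣ) : IsCompact (signedOrbit σ ξ ε) := by
  have := compactSpace_orthogonalGroup N
  have : CompactSpace G := isCompact_iff_compactSpace.1 hGc.isCompact
  have h1 : IsCompact (σ ⁻¹' {ε}) := ((isClosed_discrete {ε}).preimage hσ).isCompact
  have h2 : Continuous fun g : G => ogAct (g : ONgrp N) ξ :=
    continuous_ogAct.comp (continuous_subtype_val.prodMk continuous_const)
  exact h1.image h2

lemma infDist_signedOrbit (ξ : Euc N) (ε : ℤˣ) (g : G) (x : Euc N) :
    Metric.infDist (ogAct (g : ONgrp N) x) (signedOrbit σ ξ ε) =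
      Metric.infDist x (signedOrbit σ ξ (σ g * ε)) := by
  have h : signedOrbit σ ξ ε = ogIso (g : ONgrp N) '' signedOrbit σ ξ (σ g * ε) := by
    ext y
    constructor
    · rintro ⟨k, hk, rfl⟩
      refine ⟨_, ⟨g⁻¹ * k, ?_, rfl⟩, ?_⟩
      · rw [map_mul, map_inv, hk, Int.units_inv_eq_self]
      · rw [ogIso_apply, ← ogAct_mul, Subgroup.coe_mul, Subgroup.coe_inv, mul_inv_cancel_left]
    · rintro ⟨_, ⟨k, hk, rfl⟩, rfl⟩
      exact ⟨g * k, by rw [map_mul, hk, ← mul_assoc, Int.units_mul_self, one_mul],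
        ogAct_mul _ _ _⟩
  rw [h, ← ogIso_apply, Metric.infDist_image (ogIso (g : ONgrp N)).isometry]

lemma signedOrbit_nonempty (hσs : Function.Surjective σ) (ξ : Euc N) (ε : ℤˣ) :
    (signedOrbit σ ξ ε).Nonempty := by
  obtain ⟨g, hg⟩ := hσs ε
  exact ⟨_, g, hg, rfl⟩

lemma norm_sub_le_infDist_signedOrbit (hσs : Function.Surjective σ) (ξ : Euc N) (ε : ℤˣ)
    (x : Euc N) : ‖x‖ - ‖ξ‖ ≤ Metric.infDist x (signedOrbit σ ξ ε) := by
  refine (Metric.le_infDist (signedOrbit_nonempty hσs ξ ε)).2 ?_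
  rintro _ ⟨g, -, rfl⟩
  rw [← norm_ogAct (g : ONgrp N) ξ, dist_eq_norm]
  exact norm_sub_norm_le _ _

/-- The difference of two bumps of radius `r` around the two halves of an orbit. -/
def bumpDiff (σ : G →* ℤˣ) (ξ : Euc N) (r : ℝ) (x : Euc N) : ℝ :=
  max 0 (r - Metric.infDist x (signedOrbit σ ξ 1)) -
    max 0 (r - Metric.infDist x (signedOrbit σ ξ (-1)))

lemma isEquivariant_bumpDiff (ξ : Euc N) (r : ℝ) : IsEquivariant G σ (bumpDiff σ ξ r) :=
  fun g x => by
    unfold bumpDiff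
    rw [infDist_signedOrbit, infDist_signedOrbit]
    rcases Int.units_eq_one_or (σ g) with h | h <;> simp [h]

lemma abs_bumpDiff_sub_le (ξ : Euc N) (r : ℝ) (x y : Euc N) :
    |bumpDiff σ ξ r x - bumpDiff σ ξ r y| ≤ 2 * dist x y := by
  have h : ∀ ε, |max 0 (r - Metric.infDist x (signedOrbit σ ξ ε)) -
      max 0 (r - Metric.infDist y (signedOrbit σ ξ ε))| ≤ dist x y := fun ε => by
    rw [max_comm 0, max_comm 0]
    refine (abs_max_sub_max_le_abs _ _ _).trans ?_
    rw [sub_sub_sub_cancel_left, abs_sub_comm, ← dist_eq]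
    simpa using (Metric.lipschitz_infDist_pt (signedOrbit σ ξ ε)).dist_le_mul x y
  have h1 := abs_le.1 (h 1)
  have h2 := abs_le.1 (h (-1))
  unfold bumpDiff
  rw [abs_le]
  constructor <;> linarith [h1.1, h1.2, h2.1, h2.2]

lemma abs_bumpDiff_le (ξ : Euc N) {r : ℝ} (hr : 0 ≤ r) (x : Euc N) : |bumpDiff σ ξ r x| ≤ r := by
  have h : ∀ ε, max 0 (r - Metric.infDist x (signedOrbit σ ξ ε)) ≤ r := fun ε =>
    max_le hr (sub_le_self _ Metric.infDist_nonneg)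
  have h0 : ∀ ε, 0 ≤ max 0 (r - Metric.infDist x (signedOrbit σ ξ ε)) := fun ε => le_max_left _ _
  unfold bumpDiff
  rw [abs_le]
  constructor <;> linarith [h 1, h (-1), h0 1, h0 (-1)]

lemma exists_equivariant_ne_zero (hs0 : 0 < s) (hs1 : s < 1) (hsN : 2 * s < N)
    (hGc : IsClosed (G : Set (ONgrp N))) (hσ : Continuous σ) (hσs : Function.Surjective σ)
    (hG2 : CondG2 G σ) : ∃ u : Euc N → ℝ, MemHs N s Set.univ u ∧ IsEquivariant G σ u ∧
      ¬ ∀ᵐ x, u x = 0 := by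
  obtain ⟨ξ, hξ⟩ := hG2
  have hξm : ξ ∉ signedOrbit σ ξ (-1) := by
    rintro ⟨g, hg, hgξ⟩
    rw [hξ g hgξ] at hg
    exact absurd hg (by decide)
  have hξp : ξ ∈ signedOrbit σ ξ 1 := ⟨1, map_one σ, ogAct_one ξ⟩
  obtain ⟨r, hr⟩ : ∃ r, r = Metric.infDist ξ (signedOrbit σ ξ (-1)) := ⟨_, rfl⟩
  have hr0 : 0 < r := by
    rw [hr]
    exact ((isCompact_signedOrbit hGc hσ ξ (-1)).isClosed.notMem_iff_infDist_pos
      (signedOrbit_nonempty hσs ξ (-1))).1 hξm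
  have hval : bumpDiff σ ξ r ξ = r := by
    rw [bumpDiff, ← hr, Metric.infDist_zero_of_mem hξp]
    simp [hr0.le]
  refine ⟨bumpDiff σ ξ r, memHs_of_lipschitz hs0 hs1 hsN (C := 2 + 2 * r) (R := ‖ξ‖ + r)
    (fun x y => ?_) (fun x y => ?_) fun x hx => ?_, isEquivariant_bumpDiff ξ r, fun h => ?_⟩
  · refine (abs_bumpDiff_sub_le ξ r x y).trans ?_
    have : 0 ≤ dist x y := dist_nonneg
    nlinarith
  · have h1 := abs_le.1 (abs_bumpDiff_le (σ := σ) ξ hr0.le x)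
    have h2 := abs_le.1 (abs_bumpDiff_le (σ := σ) ξ hr0.le y)
    rw [abs_le]
    constructor <;> linarith [h1.1, h1.2, h2.1, h2.2]
  · have h1 : ∀ ε, max 0 (r - Metric.infDist x (signedOrbit σ ξ ε)) = 0 := fun ε =>
      max_eq_left (by linarith [norm_sub_le_infDist_signedOrbit hσs ξ ε x])
    rw [bumpDiff, h1, h1, sub_zero]
  · have hcont : Continuous (bumpDiff σ ξ r) := by
      unfold bumpDiff
      have := fun ε => Metric.continuous_infDist_pt (signedOrbit σ ξ ε)
      fun_prop
    have h1 := (hcont.ae_eq_iff_eq volume continuous_const).1 h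
    have h2 := congrFun h1 ξ
    simp only [hval] at h2
    exact hr0.ne' h2

end Nonempty

section Minimization

variable {N : ℕ} {s : ℝ} {G : Subgroup (ONgrp N)} {σ : G →* ℤˣ}

lemma IsEquivariant.const_mul {u : Euc N → ℝ} (hu : IsEquivariant G σ u) (c : ℝ) :
    IsEquivariant G σ fun x => c * u x := fun g x => by
  beta_reduce
  rw [hu g]; ring

lemma IsEquivariant.add {u v : Euc N → ℝ} (hu : IsEquivariant G σ u) (hv : IsEquivariant G σ v) :
    IsEquivariant G σ fun x => u x + v x := fun g x => by
  beta_reduce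
  rw [hu g, hv g]; ring

lemma IsEquivariant.sub {u v : Euc N → ℝ} (hu : IsEquivariant G σ u) (hv : IsEquivariant G σ v) :
    IsEquivariant G σ fun x => u x - v x := fun g x => by
  beta_reduce
  rw [hu g, hv g]; ring

lemma critInt_normalize (hs0 : 0 < s) (hsN : 2 * s < N) {u : Euc N → ℝ}
    (hu : 0 < critInt N s u) :
    critInt N s (fun x => critInt N s u ^ (-(1 / twoStar N s)) * u x) = 1 := by
  have hp := two_lt_twoStar hs0 hsN
  rw [critInt_const_mul, abs_of_pos (by positivity), ← rpow_mul hu.le, neg_mul,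
    one_div_mul_cancel (by linarith), rpow_neg_one, inv_mul_cancel₀ hu.ne']

lemma exists_sobolev_level (hs0 : 0 < s) (hsN : 2 * s < N)
    (hne : ∃ u : Euc N → ℝ, MemHs N s Set.univ u ∧ IsEquivariant G σ u ∧ ¬ ∀ᵐ x, u x = 0) :
    ∃ S : ℝ, 0 < S ∧
      (∀ u : Euc N → ℝ, MemHs N s Set.univ u → IsEquivariant G σ u →
        S * critInt N s u ^ (2 / twoStar N s) ≤ gagSq N s u) ∧
      ∀ ε : ℝ, 0 < ε → ∃ u : Euc N → ℝ, MemHs N s Set.univ u ∧ IsEquivariant G σ u ∧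
        critInt N s u = 1 ∧ gagSq N s u < S + ε := by
  have hp := two_lt_twoStar hs0 hsN
  obtain ⟨C, hC, hsob⟩ := exists_sobolev (N := N) hs0 hsN
  obtain ⟨T, hT⟩ : ∃ T : Set ℝ, T = {c | ∃ u : Euc N → ℝ, MemHs N s Set.univ u ∧
    IsEquivariant G σ u ∧ critInt N s u = 1 ∧ gagSq N s u = c} := ⟨_, rfl⟩
  have hTb : ∀ c ∈ T, C⁻¹ ≤ c := by
    rw [hT]
    rintro _ ⟨u, hu, -, hu1, rfl⟩
    have := hsob u hu
    rw [hu1, one_rpow] at this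
    rwa [inv_le_iff_one_le_mul₀' hC]
  have hnorm : ∀ u : Euc N → ℝ, MemHs N s Set.univ u → IsEquivariant G σ u →
      0 < critInt N s u → (critInt N s u ^ (-(1 / twoStar N s))) ^ 2 * gagSq N s u ∈ T :=
    fun u hu hσu h0 => by
      rw [hT]
      exact ⟨_, hu.const_mul _, hσu.const_mul _, critInt_normalize hs0 hsN h0,
        gagSq_const_mul _ _⟩
  have hTne : T.Nonempty := by
    obtain ⟨u, hu, hσu, hu0⟩ := hne
    exact ⟨_, hnorm u hu hσu (hu.critInt_pos hs0 hsN hu0)⟩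
  have hbdd : BddBelow T := ⟨_, hTb⟩
  refine ⟨sInf T, lt_of_lt_of_le (inv_pos.2 hC) (le_csInf hTne hTb), fun u hu hσu => ?_,
    fun ε hε => ?_⟩
  · rcases (critInt_nonneg (s := s) u).eq_or_lt with h0 | h0
    · rw [← h0, zero_rpow (by positivity), mul_zero]
      exact gagSq_nonneg u
    · have h1 := csInf_le hbdd (hnorm u hu hσu h0)
      have h2 : (critInt N s u ^ (-(1 / twoStar N s))) ^ 2 =
          (critInt N s u ^ (2 / twoStar N s))⁻¹ := by
        rw [← rpow_natCast, ← rpow_mul h0.le, ← rpow_neg h0.le]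
        congr 1
        push_cast
        ring
      rw [h2, inv_mul_eq_div, le_div_iff₀ (by positivity)] at h1
      exact h1
  · obtain ⟨c, hc, hcε⟩ := exists_lt_of_csInf_lt hTne (lt_add_of_pos_right (sInf T) hε)
    rw [hT] at hc
    obtain ⟨u, hu, hσu, hu1, rfl⟩ := hc
    exact ⟨u, hu, hσu, hu1, hcε⟩

/-- A normalized equivariant function can be rescaled so that a fixed amount of mass sits in a
fixed ball. -/
lemma exists_concentrated_rescaling (hs0 : 0 < s) (hsN : 2 * s < N) (hG1 : CondG1 G) {A : ℝ}
    (hA : 0 ≤ A) : ∃ R M : ℝ, 0 < R ∧ 0 < M ∧ ∀ u : Euc N → ℝ, MemHs N s Set.univ u →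
      IsEquivariant G σ u → critInt N s u = 1 → gagSq N s u ≤ A →
      ∃ v : Euc N → ℝ, MemHs N s Set.univ v ∧ IsEquivariant G σ v ∧ critInt N s v = 1 ∧
        gagSq N s v = gagSq N s u ∧ M ≤ ∫ x in Metric.ball 0 R, |v x| := by
  have hp := two_lt_twoStar hs0 hsN
  obtain ⟨C, hC, hball⟩ := exists_critInt_le_of_ball_bound (N := N) hs0 hsN
  obtain ⟨M, hM, hMC⟩ : ∃ M : ℝ, 0 < M ∧ C * M ^ (twoStar N s - 2) * A < 1 := by
    refine ⟨(C * (A + 1))⁻¹ ^ (1 / (twoStar N s - 2)), by positivity, ?_⟩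
    rw [← rpow_mul (by positivity), one_div_mul_cancel (by linarith), rpow_one, mul_inv,
      mul_inv_cancel_left₀ hC.ne', inv_mul_eq_div, div_lt_one (by linarith)]
    linarith
  obtain ⟨R, hR, hrad⟩ := exists_concentration_radius (σ := σ) hs0 hsN hG1 hM
  refine ⟨R + 1, M, by linarith, hM, fun u hu hσu hu1 huA => ?_⟩
  obtain ⟨c, r, hr, hcr⟩ : ∃ (c : Euc N) (r : ℝ), 0 < r ∧
      M * r ^ (((N : ℝ) + 2 * s) / 2) < ∫ x in Metric.ball c r, |u x| := by
    by_contra! h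
    have h1 := hball u M hu hM fun c r hr => h c r hr
    rw [hu1] at h1
    have h2 : C * M ^ (twoStar N s - 2) * gagSq N s u ≤ C * M ^ (twoStar N s - 2) * A := by
      gcongr
    linarith
  obtain ⟨ξ, hξ⟩ : ∃ ξ, ξ = (fixedSpace G).starProjection c := ⟨_, rfl⟩
  have hξm : ξ ∈ fixedSpace G := hξ ▸ Submodule.starProjection_apply_mem _ _
  have hz : r⁻¹ • (c - ξ) ∈ (fixedSpace G)ᗮ :=
    Submodule.smul_mem _ _ (hξ ▸ Submodule.sub_starProjection_mem_orthogonal c)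
  have hv := hu.rescale hsN hr ξ
  have hσv := hσu.rescale (s := s) hξm r
  have hv1 : critInt N s (rescale N s ξ r u) = 1 := by rw [critInt_rescale hsN hr, hu1]
  have hmass : M ≤ ∫ x in Metric.ball (r⁻¹ • (c - ξ)) 1, |rescale N s ξ r u x| := by
    rw [setIntegral_abs_rescale hr, smul_inv_smul₀ hr.ne', add_sub_cancel, rpow_neg hr.le,
      inv_mul_eq_div, le_div_iff₀ (by positivity)]
    exact hcr.le
  have hzR := hrad _ hv hσv hv1.le _ hz hmass
  refine ⟨_, hv, hσv, hv1, gagSq_rescale hr u, hmass.trans ?_⟩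
  refine setIntegral_mono_set (hv.integrableOn_ball hs0 hsN 0 _).abs
    (ae_of_all _ fun x => abs_nonneg _) (Metric.ball_subset_ball' ?_).eventuallyLE
  rw [dist_zero_right]
  linarith

lemma exists_equivariant_limit {f : ℕ → Euc N → ℝ} (hf : ∀ n, Measurable (f n))
    (hσf : ∀ n, IsEquivariant G σ (f n)) {g : Euc N → ℝ}
    (hg : ∀ᵐ x, Tendsto (fun n => f n x) atTop (𝓝 (g x))) :
    ∃ u : Euc N → ℝ, Measurable u ∧ IsEquivariant G σ u ∧
      (∀ᵐ x, Tendsto (fun n => f n x) atTop (𝓝 (u x))) ∧ ∀ᵐ x, g x = u x := by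
  obtain ⟨A, hA⟩ : ∃ A : Set (Euc N), A = {x | ∃ c, Tendsto (fun n => f n x) atTop (𝓝 c)} :=
    ⟨_, rfl⟩
  have hAm : MeasurableSet A := hA ▸ measurableSet_exists_tendsto hf
  have hex : ∀ x, ∃ c, Tendsto (fun n => A.indicator (f n) x) atTop (𝓝 c) := fun x => by
    by_cases hx : x ∈ A
    · simp only [Set.indicator_of_mem hx]
      rwa [hA] at hx
    · simp only [Set.indicator_of_notMem hx]
      exact ⟨0, tendsto_const_nhds⟩
  choose u hu using hex
  have hAsub : ∀ (g : G) x, x ∈ A → ogAct (g : ONgrp N) x ∈ A := fun g x hx => by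
    rw [hA] at hx ⊢
    obtain ⟨c, hc⟩ := hx
    exact ⟨_, by simpa only [hσf _ g] using hc.const_mul ((σ g : ℤ) : ℝ)⟩
  have hAiff : ∀ (g : G) x, ogAct (g : ONgrp N) x ∈ A ↔ x ∈ A := fun g x =>
    ⟨fun hx => by
      have := hAsub g⁻¹ _ hx
      rwa [← ogAct_mul, Subgroup.coe_inv, inv_mul_cancel, ogAct_one] at this, hAsub g x⟩
  have hlim : ∀ᵐ x, Tendsto (fun n => f n x) atTop (𝓝 (u x)) := by
    filter_upwards [hg] with x hx
    have hxA : x ∈ A := by rw [hA]; exact ⟨_, hx⟩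
    simpa only [Set.indicator_of_mem hxA] using hu x
  refine ⟨u, measurable_of_tendsto_metrizable (fun n => (hf n).indicator hAm)
    (tendsto_pi_nhds.2 hu), fun g x => ?_, hlim, ?_⟩
  · refine tendsto_nhds_unique (hu _) ?_
    refine ((hu x).const_mul ((σ g : ℤ) : ℝ)).congr fun n => ?_
    by_cases hx : x ∈ A
    · rw [Set.indicator_of_mem hx, Set.indicator_of_mem ((hAiff g x).2 hx), hσf n g]
    · rw [Set.indicator_of_notMem hx, Set.indicator_of_notMem (mt (hAiff g x).1 hx), mul_zero]
  · filter_upwards [hg, hlim] with x h1 h2 using tendsto_nhds_unique h1 h2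

lemma MemHs.of_tendsto_ae (hs0 : 0 < s) (hsN : 2 * s < N) {f : ℕ → Euc N → ℝ} {u : Euc N → ℝ}
    {A B : ℝ} (hf : ∀ n, MemHs N s Set.univ (f n)) (hA : ∀ n, gagSq N s (f n) ≤ A)
    (hB : ∀ n, critInt N s (f n) ≤ B) (hu : Measurable u)
    (hlim : ∀ᵐ x, Tendsto (fun n => f n x) atTop (𝓝 (u x))) :
    MemHs N s Set.univ u ∧
      Tendsto (fun n => gagSq N s (f n) - gagSq N s (fun x => f n x - u x)) atTop
        (𝓝 (gagSq N s u)) ∧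
      Tendsto (fun n => critInt N s (f n) - critInt N s (fun x => f n x - u x)) atTop
        (𝓝 (critInt N s u)) := by
  have hp := two_lt_twoStar hs0 hsN
  have hlim2 : ∀ᵐ p : Euc N × Euc N, Tendsto (fun n => diffQuot N s (f n) p) atTop
      (𝓝 (diffQuot N s u p)) := by
    filter_upwards [Measure.quasiMeasurePreserving_fst.ae hlim,
      Measure.quasiMeasurePreserving_snd.ae hlim] with p h1 h2
    exact (h1.sub h2).div_const _
  have hsq : ∀ (w : Euc N → ℝ) p, |diffQuot N s w p| ^ (2 : ℝ) = diffQuot N s w p ^ 2 :=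
    fun w p => by rw [rpow_two, sq_abs]
  have hdm : ∀ n, AEStronglyMeasurable (diffQuot N s (f n)) := fun n =>
    (measurable_diffQuot (hf n).meas).aestronglyMeasurable
  have hdi : ∀ n, Integrable fun p => |diffQuot N s (f n) p| ^ (2 : ℝ) := fun n => by
    simpa only [hsq] using (hf n).diffQuot_sq
  have hdA : ∀ n, ∫ p, |diffQuot N s (f n) p| ^ (2 : ℝ) ≤ A := fun n => by
    simpa only [hsq, ← gagSq_eq] using hA n
  have hfm : ∀ n, AEStronglyMeasurable (f n) := fun n => (hf n).meas.aestronglyMeasurable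
  have hp0 : 0 < twoStar N s := by linarith
  refine ⟨MemHs.mk' hu (integrable_rpow_of_tendsto_ae hp0 hfm (fun n => (hf n).lp) hB hlim) ?_,
    ?_, brezis_lieb hp0 hfm (fun n => (hf n).lp) hB hlim⟩
  · simpa only [hsq] using integrable_rpow_of_tendsto_ae two_pos hdm hdi hdA hlim2
  · have h := brezis_lieb two_pos hdm hdi hdA hlim2
    have hsub : ∀ n p, diffQuot N s (f n) p - diffQuot N s u p =
        diffQuot N s (fun x => f n x - u x) p := fun n p => by
      unfold diffQuot; ring
    simpa only [hsub, hsq, ← gagSq_eq] using h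

lemma one_lt_rpow_add_rpow {t θ : ℝ} (ht0 : 0 < t) (ht1 : t < 1) (hθ : θ < 1) :
    1 < t ^ θ + (1 - t) ^ θ := by
  have h1 := rpow_lt_rpow_of_exponent_gt ht0 ht1 hθ
  have h2 := rpow_lt_rpow_of_exponent_gt (show 0 < 1 - t by linarith) (by linarith) hθ
  rw [rpow_one] at h1 h2
  linarith

/-- The equivariant Sobolev quotient is minimized. -/
lemma exists_sobolev_minimizer (hs0 : 0 < s) (hsN : 2 * s < N) (hG1 : CondG1 G)
    (hne : ∃ u : Euc N → ℝ, MemHs N s Set.univ u ∧ IsEquivariant G σ u ∧ ¬ ∀ᵐ x, u x = 0) :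
    ∃ u : Euc N → ℝ, MemHs N s Set.univ u ∧ IsEquivariant G σ u ∧ critInt N s u = 1 ∧
      0 < gagSq N s u ∧ ∀ v : Euc N → ℝ, MemHs N s Set.univ v → IsEquivariant G σ v →
        gagSq N s u * critInt N s v ^ (2 / twoStar N s) ≤ gagSq N s v := by
  have hp := two_lt_twoStar hs0 hsN
  obtain ⟨S, hS, hmin, hseq⟩ := exists_sobolev_level hs0 hsN hne
  obtain ⟨R, M, hR, hM, hconc⟩ := exists_concentrated_rescaling (σ := σ) hs0 hsN hG1
    (show 0 ≤ S + 1 by linarith)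
  have hseq' : ∀ n : ℕ, ∃ v : Euc N → ℝ, MemHs N s Set.univ v ∧ IsEquivariant G σ v ∧
      critInt N s v = 1 ∧ gagSq N s v < S + 1 / ((n : ℝ) + 1) ∧
        M ≤ ∫ x in Metric.ball 0 R, |v x| := fun n => by
    obtain ⟨u, hu, hσu, hu1, huS⟩ := hseq (1 / ((n : ℝ) + 1)) (by positivity)
    have h1 : 1 / ((n : ℝ) + 1) ≤ 1 := by
      rw [div_le_one (by positivity)]
      linarith [n.cast_nonneg (α := ℝ)]
    obtain ⟨v, hv, hσv, hv1, hvu, hvM⟩ := hconc u hu hσu hu1 (by linarith)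
    exact ⟨v, hv, hσv, hv1, hvu ▸ huS, hvM⟩
  choose f hf hσf hf1 hfS hfM using hseq'
  have hfA : ∀ n, gagSq N s (f n) ≤ S + 1 := fun n => by
    have h1 : 1 / ((n : ℝ) + 1) ≤ 1 := by
      rw [div_le_one (by positivity)]
      linarith [n.cast_nonneg (α := ℝ)]
    linarith [hfS n]
  have hfge : ∀ n, S ≤ gagSq N s (f n) := fun n => by
    have := hmin _ (hf n) (hσf n)
    rwa [hf1, one_rpow, mul_one] at this
  have hflim : Tendsto (fun n => gagSq N s (f n)) atTop (𝓝 S) := by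
    have := tendsto_one_div_add_atTop_nhds_zero_nat (𝕜 := ℝ)
    exact tendsto_of_tendsto_of_tendsto_of_le_of_le tendsto_const_nhds
      (by simpa using this.const_add S) hfge fun n => (hfS n).le
  obtain ⟨φ, hφ, g, hg, hg0⟩ := exists_subseq_tendsto_ae hs0 hsN hf hfA fun n => (hf1 n).le
  obtain ⟨u, hum, hσu, hulim, hgu⟩ := exists_equivariant_limit (fun n => (hf (φ n)).meas)
    (fun n => hσf (φ n)) hg
  obtain ⟨hu, hgag, hcrit⟩ := MemHs.of_tendsto_ae hs0 hsN (fun n => hf (φ n))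
    (fun n => hfA (φ n)) (fun n => (hf1 (φ n)).le) hum hulim
  have hu0 : ¬ ∀ᵐ x, u x = 0 := fun h => hg0 R M hR.le hM hfM <| by
    filter_upwards [h, hgu] with x h1 h2
    rw [h2, h1]
  have ht0 := hu.critInt_pos hs0 hsN hu0
  have hgag' : Tendsto (fun n => gagSq N s (fun x => f (φ n) x - u x)) atTop
      (𝓝 (S - gagSq N s u)) :=
    ((hflim.comp hφ.tendsto_atTop).sub hgag).congr fun n => by simp
  have hcrit' : Tendsto (fun n => critInt N s (fun x => f (φ n) x - u x)) atTop
      (𝓝 (1 - critInt N s u)) :=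
    (hcrit.const_sub 1).congr fun n => by rw [hf1]; ring
  have ht1 : critInt N s u ≤ 1 :=
    sub_nonneg.1 (ge_of_tendsto' hcrit' fun n => critInt_nonneg _)
  have hθ : 2 / twoStar N s < 1 := by rw [div_lt_one (by linarith)]; exact hp
  have hrest : S * (1 - critInt N s u) ^ (2 / twoStar N s) ≤ S - gagSq N s u :=
    le_of_tendsto_of_tendsto' ((hcrit'.rpow_const (Or.inr (by positivity))).const_mul S) hgag'
      fun n => hmin _ ((hf _).sub hs0 hsN hu) ((hσf _).sub hσu)
  have hself := hmin u hu hσu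
  have ht : critInt N s u = 1 := by
    by_contra hne
    have := one_lt_rpow_add_rpow ht0 (lt_of_le_of_ne ht1 hne) hθ
    nlinarith
  rw [ht, one_rpow, mul_one] at hself
  rw [ht, sub_self, zero_rpow (by positivity), mul_zero] at hrest
  have hSu : gagSq N s u = S := by linarith
  exact ⟨u, hu, hσu, ht, hSu ▸ hS, fun v hv hσv => hSu ▸ hmin v hv hσv⟩

end Minimization

section EulerLagrange

variable {N : ℕ} {s : ℝ} {G : Subgroup (ONgrp N)} {σ : G →* ℤˣ}

lemma abs_rpow_sub_two_mul_self {p : ℝ} (hp : 2 < p) (a : ℝ) :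
    |a| ^ (p - 2) * a * a = |a| ^ p := by
  rcases eq_or_ne a 0 with rfl | ha
  · rw [abs_zero, zero_rpow (by linarith : p ≠ 0), mul_zero]
  · rw [mul_assoc, ← sq, ← sq_abs, ← rpow_natCast, ← rpow_add (abs_pos.2 ha)]
    congr 1
    push_cast
    ring

lemma abs_abs_rpow_sub_two_mul {p : ℝ} (hp : 2 < p) (a : ℝ) :
    |(|a| ^ (p - 2) * a)| = |a| ^ (p - 1) := by
  rcases eq_or_ne a 0 with rfl | ha
  · rw [abs_zero, zero_rpow (by linarith : p - 1 ≠ 0), mul_zero, abs_zero]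
  · rw [abs_mul, abs_of_nonneg (by positivity), ← rpow_add_one (abs_pos.2 ha).ne']
    congr 1
    ring

lemma abs_rpow_sub_two_mul_mul_le {p : ℝ} (hp : 2 < p) (a b : ℝ) :
    p * |(|a| ^ (p - 2) * a * b)| ≤ (p - 1) * |a| ^ p + |b| ^ p := by
  have hconj : p.HolderConjugate (p / (p - 1)) := Real.HolderConjugate.conjExponent (by linarith)
  have h := young_inequality_of_nonneg (abs_nonneg b)
    (show 0 ≤ |a| ^ (p - 1) by positivity) hconj
  have hp1 : p - 1 ≠ 0 := by linarith
  have hp0 : p ≠ 0 := by linarith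
  rw [← rpow_mul (abs_nonneg a), mul_div_cancel₀ _ hp1] at h
  rw [abs_mul, abs_abs_rpow_sub_two_mul hp, mul_comm (|a| ^ (p - 1))]
  have h2 := mul_le_mul_of_nonneg_left h (show 0 ≤ p by linarith)
  refine h2.trans (le_of_eq ?_)
  field_simp
  ring

lemma abs_add_rpow_ge {p : ℝ} (hp : 2 < p) (a h : ℝ) :
    |a| ^ p + p * (|a| ^ (p - 2) * a * h) ≤ |a + h| ^ p := by
  have h1 := (mul_le_mul_of_nonneg_left (le_abs_self (|a| ^ (p - 2) * a * (a + h)))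
    (show 0 ≤ p by linarith)).trans (abs_rpow_sub_two_mul_mul_le hp a (a + h))
  rw [mul_add (|a| ^ (p - 2) * a), abs_rpow_sub_two_mul_self hp] at h1
  linarith

lemma MemHs.integrable_abs_rpow_sub_two_mul (hs0 : 0 < s) (hsN : 2 * s < N) {u v : Euc N → ℝ}
    (hu : MemHs N s Set.univ u) (hv : MemHs N s Set.univ v) :
    Integrable fun x => |u x| ^ (twoStar N s - 2) * u x * v x := by
  have hp := two_lt_twoStar hs0 hsN
  refine ((hu.lp.const_mul (twoStar N s - 1)).add hv.lp).mono'
    (((hu.meas.abs.pow_const _).mul hu.meas).mul hv.meas).aestronglyMeasurable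
    (ae_of_all _ fun x => ?_)
  rw [norm_eq_abs]
  refine le_trans ?_ (abs_rpow_sub_two_mul_mul_le hp (u x) (v x))
  have := abs_nonneg (|u x| ^ (twoStar N s - 2) * u x * v x)
  nlinarith

lemma critInt_add_ge (hs0 : 0 < s) (hsN : 2 * s < N) {u v : Euc N → ℝ}
    (hu : MemHs N s Set.univ u) (hv : MemHs N s Set.univ v) :
    critInt N s u + twoStar N s * ∫ x, |u x| ^ (twoStar N s - 2) * u x * v x ≤
      critInt N s fun x => u x + v x := by
  have hp := two_lt_twoStar hs0 hsN
  have hi := (hu.integrable_abs_rpow_sub_two_mul hs0 hsN hv).const_mul (twoStar N s)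
  have h := integral_add hu.lp hi
  rw [integral_const_mul] at h
  rw [critInt, ← h]
  exact integral_mono (hu.lp.add hi) (hu.add hs0 hsN hv).lp fun x => abs_add_rpow_ge hp _ _

/-- Euler–Lagrange equation for minimizers of the Sobolev quotient, in a direction `v`. -/
lemma gagInner_eq_of_minimizer (hs0 : 0 < s) (hsN : 2 * s < N) {u v : Euc N → ℝ} {S : ℝ}
    (hu : MemHs N s Set.univ u) (hv : MemHs N s Set.univ v) (hS : 0 ≤ S)
    (hu0 : 0 < critInt N s u) (huN : gagSq N s u = critInt N s u)
    (huS : S * critInt N s u ^ (2 / twoStar N s) = gagSq N s u)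
    (hmin : ∀ ε : ℝ, S * critInt N s (fun x => u x + ε * v x) ^ (2 / twoStar N s) ≤
      gagSq N s fun x => u x + ε * v x) :
    gagInner N s u v = ∫ x, |u x| ^ (twoStar N s - 2) * u x * v x := by
  have hp := two_lt_twoStar hs0 hsN
  obtain ⟨I, hI⟩ : ∃ I, I = ∫ x, |u x| ^ (twoStar N s - 2) * u x * v x := ⟨_, rfl⟩
  obtain ⟨b, hb⟩ : ∃ b, b = critInt N s u := ⟨_, rfl⟩
  rw [← hI]
  rw [← hb] at hu0 huN huS
  obtain ⟨H, hH⟩ : ∃ H : ℝ → ℝ, H = fun ε => b + 2 * (ε * gagInner N s u v) +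
      ε ^ 2 * gagSq N s v - S * (b + twoStar N s * (ε * I)) ^ (2 / twoStar N s) := ⟨_, rfl⟩
  have hlow : ∀ ε, 0 < b + twoStar N s * (ε * I) → 0 ≤ H ε := fun ε hε => by
    have h1 := critInt_add_ge hs0 hsN hu (hv.const_mul ε)
    have h2 : ∫ x, |u x| ^ (twoStar N s - 2) * u x * (ε * v x) = ε * I := by
      rw [hI, ← integral_const_mul]
      congr 1; ext x; ring
    rw [h2, ← hb] at h1
    have h3 := hmin ε
    rw [gagSq_add hu (hv.const_mul ε), gagInner_const_mul, gagSq_const_mul, huN] at h3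
    have h4 := mul_le_mul_of_nonneg_left
      (rpow_le_rpow hε.le h1 (show 0 ≤ 2 / twoStar N s by positivity)) hS
    rw [hH]
    linarith
  have hH0 : H 0 = 0 := by
    rw [hH]
    simp only [zero_mul, mul_zero, add_zero, huS, huN]
    ring
  have hev : ∀ᶠ ε in 𝓝 (0 : ℝ), 0 < b + twoStar N s * (ε * I) := by
    have hc : Continuous fun ε : ℝ => b + twoStar N s * (ε * I) := by fun_prop
    exact hc.continuousAt.eventually (lt_mem_nhds (by simpa using hu0))
  have hloc : IsLocalMin H 0 := hev.mono fun ε hε => by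
    rw [hH0]
    exact hlow ε hε
  have hlin : HasDerivAt (fun ε : ℝ => b + twoStar N s * (ε * I)) (twoStar N s * I) 0 := by
    simpa using (((hasDerivAt_id (0 : ℝ)).mul_const I).const_mul (twoStar N s)).const_add b
  have hpow := (hlin.rpow_const (p := 2 / twoStar N s)
    (Or.inl (by simpa using hu0.ne'))).const_mul S
  have hquad : HasDerivAt (fun ε : ℝ => b + 2 * (ε * gagInner N s u v) + ε ^ 2 * gagSq N s v)
      (2 * gagInner N s u v) 0 := by
    have h1 := (((hasDerivAt_id (0 : ℝ)).mul_const (gagInner N s u v)).const_mul 2).const_add b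
    have h2 := ((hasDerivAt_id (0 : ℝ)).pow 2).mul_const (gagSq N s v)
    exact (h1.add h2).congr_deriv (by simp)
  have hder := hloc.hasDerivAt_eq_zero (by rw [hH]; exact hquad.sub hpow)
  have hSb : S * b ^ (2 / twoStar N s - 1) = 1 := by
    rw [rpow_sub_one hu0.ne', ← mul_div_assoc, huS, huN, div_self hu0.ne']
  have h5 : S * (twoStar N s * I * (2 / twoStar N s) *
      (b + twoStar N s * (0 * I)) ^ (2 / twoStar N s - 1)) = 2 * I := by
    rw [zero_mul, mul_zero, add_zero]
    have : twoStar N s * I * (2 / twoStar N s) = 2 * I := by field_simp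
    rw [this, mul_left_comm, hSb, mul_one]
  rw [h5] at hder
  linarith

end EulerLagrange

section Nehari

variable {N : ℕ} {s : ℝ} {G : Subgroup (ONgrp N)} {σ : G →* ℤˣ}

lemma nehariFun_univ (u : Euc N → ℝ) :
    nehariFun N s Set.univ u = gagSq N s u - critInt N s u := by
  rw [nehariFun, setIntegral_univ, critInt]

lemma energy_univ (u : Euc N → ℝ) : energy N s Set.univ u =
    1 / 2 * gagSq N s u - 1 / twoStar N s * critInt N s u := by
  rw [energy, setIntegral_univ, critInt]

lemma pairing_univ (u v : Euc N → ℝ) : pairing N s Set.univ u v =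
    gagInner N s u v - ∫ x, |u x| ^ (twoStar N s - 2) * u x * v x := by
  rw [pairing, setIntegral_univ, gagInner]

lemma exists_nehari_minimizer (hs0 : 0 < s) (hsN : 2 * s < N) (hG1 : CondG1 G)
    (hne : ∃ u : Euc N → ℝ, MemHs N s Set.univ u ∧ IsEquivariant G σ u ∧ ¬ ∀ᵐ x, u x = 0) :
    ∃ (u : Euc N → ℝ) (S : ℝ), MemHs N s Set.univ u ∧ IsEquivariant G σ u ∧ 0 < critInt N s u ∧
      gagSq N s u = critInt N s u ∧ 0 < S ∧
      S * critInt N s u ^ (2 / twoStar N s) = gagSq N s u ∧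
      ∀ v : Euc N → ℝ, MemHs N s Set.univ v → IsEquivariant G σ v →
        S * critInt N s v ^ (2 / twoStar N s) ≤ gagSq N s v := by
  have hp := two_lt_twoStar hs0 hsN
  obtain ⟨u, hu, hσu, hu1, hS, hmin⟩ := exists_sobolev_minimizer hs0 hsN hG1 hne
  obtain ⟨τ, hτ0, hτ⟩ : ∃ τ : ℝ, 0 < τ ∧ τ ^ (twoStar N s - 2) = gagSq N s u :=
    ⟨gagSq N s u ^ (1 / (twoStar N s - 2)), by positivity, by
      rw [← rpow_mul hS.le, one_div_mul_cancel (by linarith), rpow_one]⟩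
  have hτp : τ ^ twoStar N s = τ ^ 2 * gagSq N s u := by
    rw [← hτ, ← rpow_natCast, ← rpow_add hτ0]
    congr 1
    push_cast
    ring
  have hcrit : critInt N s (fun x => τ * u x) = τ ^ twoStar N s := by
    rw [critInt_const_mul, hu1, mul_one, abs_of_pos hτ0]
  refine ⟨fun x => τ * u x, gagSq N s u, hu.const_mul τ, hσu.const_mul τ, ?_, ?_, hS, ?_, hmin⟩
  · rw [hcrit]; positivity
  · rw [gagSq_const_mul, hcrit, hτp]
  · rw [hcrit, ← rpow_mul hτ0.le, mul_div_cancel₀ _ (by linarith), rpow_two, gagSq_const_mul,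
      mul_comm]

lemma energy_eq_mval (hs0 : 0 < s) (hsN : 2 * s < N) {u : Euc N → ℝ} {S : ℝ}
    (hu : MemHs N s Set.univ u) (hσu : IsEquivariant G σ u) (hu0 : 0 < critInt N s u)
    (huN : gagSq N s u = critInt N s u)
    (huS : S * critInt N s u ^ (2 / twoStar N s) = gagSq N s u)
    (hmin : ∀ v : Euc N → ℝ, MemHs N s Set.univ v → IsEquivariant G σ v →
        S * critInt N s v ^ (2 / twoStar N s) ≤ gagSq N s v) :
    energy N s Set.univ u = mval N s Set.univ G σ := by
  have hp := two_lt_twoStar hs0 hsN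
  symm
  refine IsLeast.csInf_eq
    (And.intro ⟨u, hu, hσu, not_ae_zero_of_critInt_ne hs0 hsN hu0.ne', ?_, rfl⟩ ?_)
  · rw [nehariFun_univ, huN, sub_self]
  · rintro _ ⟨v, hv, hσv, hv0, hvN, rfl⟩
    rw [nehariFun_univ, sub_eq_zero] at hvN
    have hv0 := hv.critInt_pos hs0 hsN hv0
    have h1 := hmin v hv hσv
    rw [energy_univ, energy_univ, huN, hvN, ← sub_mul, ← sub_mul]
    have h2 : 1 / twoStar N s < 1 / 2 := one_div_lt_one_div_of_lt two_pos hp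
    refine mul_le_mul_of_nonneg_left ?_ (by linarith)
    rw [hvN, ← le_div_iff₀ (by positivity)] at h1
    rw [huN, ← eq_div_iff (by positivity)] at huS
    have h3 : ∀ b : ℝ, 0 < b → b / b ^ (2 / twoStar N s) = b ^ (1 - 2 / twoStar N s) :=
      fun b hb => by rw [rpow_sub hb, rpow_one]
    rw [huS, h3 _ hu0, h3 _ hv0] at h1
    have hθ : 0 < 1 - 2 / twoStar N s := by
      rw [sub_pos, div_lt_one (by linarith)]
      exact hp
    exact (rpow_le_rpow_iff hu0.le hv0.le hθ).1 h1

end Nehari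

section Averaging

variable {Γ X : Type*} [MeasurableSpace Γ] [MeasurableSpace X] {μ : Measure Γ}
  [IsProbabilityMeasure μ] {ν : Measure X} [SFinite ν] {T : Γ → X → X} {ε : Γ → ℝ}

lemma integrable_comp_action (hT : Measurable (Function.uncurry T))
    (hTν : ∀ g, MeasurePreserving (T g) ν ν) {F : X → ℝ} (hF : Integrable F ν) :
    Integrable (fun z : Γ × X => F (T z.1 z.2)) (μ.prod ν) :=
  ((MeasurePreserving.id μ).skew_product hT
    (ae_of_all _ fun g => (hTν g).map_eq)).integrable_comp_of_integrable (hF.comp_snd μ)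

lemma ae_integrable_comp_action (hT : Measurable (Function.uncurry T))
    (hTν : ∀ g, MeasurePreserving (T g) ν ν) {q : ℝ} (hq : 1 ≤ q) {F : X → ℝ}
    (hFm : Measurable F) (hF : Integrable (fun x => |F x| ^ q) ν) :
    ∀ᵐ x ∂ν, Integrable (fun g => F (T g x)) μ := by
  filter_upwards [(integrable_comp_action (μ := μ) hT hTν hF).prod_left_ae] with x hx
  have hm : Measurable fun g => F (T g x) :=
    hFm.comp (hT.comp (measurable_id.prodMk measurable_const))
  refine ((integrable_const 1).add hx).mono' hm.aestronglyMeasurable (ae_of_all _ fun g => ?_)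
  rw [norm_eq_abs, Pi.add_apply]
  rcases le_total |F (T g x)| 1 with h | h
  · have : 0 ≤ |F (T g x)| ^ q := by positivity
    linarith
  · have := rpow_le_rpow_of_exponent_le h hq
    rw [rpow_one] at this
    linarith

lemma measurable_average (hT : Measurable (Function.uncurry T)) (hε : Measurable ε) {F : X → ℝ}
    (hFm : Measurable F) : Measurable fun x => ∫ g, ε g * F (T g x) ∂μ := by
  refine (StronglyMeasurable.integral_prod_left (f := fun g x => ε g * F (T g x)) ?_).measurable
  exact ((hε.comp measurable_fst).mul (hFm.comp hT)).stronglyMeasurable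

/-- Averaging over measure-preserving maps preserves `L^q`. -/
lemma integrable_average_rpow (hT : Measurable (Function.uncurry T))
    (hTν : ∀ g, MeasurePreserving (T g) ν ν) (hε : Measurable ε) (hε1 : ∀ g, |ε g| = 1) {q : ℝ}
    (hq : 1 ≤ q) {F : X → ℝ} (hFm : Measurable F) (hF : Integrable (fun x => |F x| ^ q) ν) :
    Integrable (fun x => |∫ g, ε g * F (T g x) ∂μ| ^ q) ν := by
  have hprod := integrable_comp_action (μ := μ) hT hTν hF
  refine hprod.integral_prod_right.mono'
    ((measurable_average hT hε hFm).abs.pow_const q).aestronglyMeasurable ?_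
  filter_upwards [hprod.prod_left_ae, ae_integrable_comp_action (μ := μ) hT hTν hq hFm hF]
    with x h1 h2
  rw [norm_of_nonneg (by positivity)]
  have h3 := integral_abs_rpow_le hq h2 h1
  rw [probReal_univ, one_rpow, one_mul] at h3
  refine le_trans (rpow_le_rpow (abs_nonneg _) ?_ (by linarith)) h3
  refine abs_integral_le_integral_abs.trans (le_of_eq ?_)
  simp only [abs_mul, hε1, one_mul]

/-- Averaging is self-adjoint against equivariant functions. -/
lemma integral_mul_average (hT : Measurable (Function.uncurry T))
    (hTν : ∀ g, MeasurePreserving (T g) ν ν) {U F : X → ℝ}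
    (hU : ∀ g x, ε g * U x = U (T g x)) (hUF : Integrable (fun x => U x * F x) ν) :
    ∫ x, U x * ∫ g, ε g * F (T g x) ∂μ ∂ν = ∫ x, U x * F x ∂ν := by
  have hprod := integrable_comp_action (μ := μ) hT hTν hUF
  have hskew := (MeasurePreserving.id μ).skew_product hT
    (ae_of_all _ fun g => (hTν g).map_eq)
  calc ∫ x, U x * ∫ g, ε g * F (T g x) ∂μ ∂ν
      = ∫ x, ∫ g, U (T g x) * F (T g x) ∂μ ∂ν := by
        congr 1; ext x
        rw [← integral_const_mul]
        congr 1; ext g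
        rw [← hU]; ring
    _ = ∫ z, U (T z.1 z.2) * F (T z.1 z.2) ∂μ.prod ν := (integral_prod_symm _ hprod).symm
    _ = ∫ g, ∫ x, U (T g x) * F (T g x) ∂ν ∂μ := integral_prod _ hprod
    _ = ∫ _, ∫ x, U x * F x ∂ν ∂μ := by
        congr 1; ext g
        have h := integral_map (hTν g).aemeasurable (f := fun x => U x * F x)
          (by rw [(hTν g).map_eq]; exact hUF.aestronglyMeasurable)
        rw [(hTν g).map_eq] at h
        exact h.symm
    _ = ∫ x, U x * F x ∂ν := by simp

end Averaging

section SymmetricCriticality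

variable {N : ℕ} {s : ℝ} {G : Subgroup (ONgrp N)} {σ : G →* ℤˣ}

/-- The action of `g⁻¹` on `ℝ^N`, for `g` in a subgroup of `O(N)`. -/
def invAct (G : Subgroup (ONgrp N)) (g : G) (x : Euc N) : Euc N := ogAct (g⁻¹ : G) x

/-- The sign character as a real number. -/
def realSign (σ : G →* ℤˣ) (g : G) : ℝ := ((σ g : ℤ) : ℝ)

lemma IsEquivariant.realSign_mul {u : Euc N → ℝ} (hu : IsEquivariant G σ u) (g : G) (x : Euc N) :
    realSign σ g * u x = u (invAct G g x) := by
  rw [invAct, hu, realSign, map_inv, Int.units_inv_eq_self]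

lemma measurePreserving_invAct (g : G) : MeasurePreserving (invAct G g) :=
  measurePreserving_ogAct _

lemma measurePreserving_prod_invAct (g : G) :
    MeasurePreserving (fun p : Euc N × Euc N => (invAct G g p.1, invAct G g p.2)) :=
  (measurePreserving_invAct g).prod (measurePreserving_invAct g)

lemma diffQuot_invAct (u : Euc N → ℝ) (g : G) (p : Euc N × Euc N) :
    diffQuot N s u (invAct G g p.1, invAct G g p.2) =
      (u (invAct G g p.1) - u (invAct G g p.2)) / dist p.1 p.2 ^ (((N : ℝ) + 2 * s) / 2) := by
  rw [diffQuot, invAct, invAct, dist_ogAct]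

lemma IsEquivariant.realSign_mul_diffQuot {u : Euc N → ℝ} (hu : IsEquivariant G σ u) (g : G)
    (p : Euc N × Euc N) : realSign σ g * diffQuot N s u p =
      diffQuot N s u (invAct G g p.1, invAct G g p.2) := by
  rw [diffQuot_invAct, ← hu.realSign_mul, ← hu.realSign_mul, diffQuot]
  ring

lemma IsEquivariant.realSign_mul_rpow {u : Euc N → ℝ} (hu : IsEquivariant G σ u) (q : ℝ) (g : G)
    (x : Euc N) : realSign σ g * (|u x| ^ q * u x) =
      |u (invAct G g x)| ^ q * u (invAct G g x) := by
  rw [← hu.realSign_mul, abs_mul, realSign, abs_intUnits, one_mul]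
  ring

lemma continuous_realSign (hσ : Continuous σ) : Continuous (realSign σ) :=
  continuous_of_discreteTopology.comp (Units.continuous_val.comp hσ)

lemma continuous_invAct : Continuous fun p : G × Euc N => invAct G p.1 p.2 := by
  have h : Continuous fun p : G × Euc N => (((p.1⁻¹ : G) : ONgrp N), p.2) :=
    (continuous_subtype_val.comp (continuous_inv.comp continuous_fst)).prodMk continuous_snd
  simpa only [Function.comp_def, invAct] using continuous_ogAct.comp h

variable [MeasurableSpace G] [BorelSpace G] {μ : Measure G}

lemma measurable_invAct : Measurable (Function.uncurry (invAct G)) :=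
  continuous_invAct.measurable

lemma measurable_prod_invAct : Measurable (Function.uncurry fun (g : G) (p : Euc N × Euc N) =>
    (invAct G g p.1, invAct G g p.2)) := by
  have h1 : Measurable fun z : G × (Euc N × Euc N) => (z.1, z.2.1) := by fun_prop
  have h2 : Measurable fun z : G × (Euc N × Euc N) => (z.1, z.2.2) := by fun_prop
  have h3 := (measurable_invAct (G := G)).comp h1
  have h4 := (measurable_invAct (G := G)).comp h2
  simp only [Function.comp_def, Function.uncurry] at h3 h4
  exact h3.prodMk h4

/-- The projection of `v` onto the `σ`-equivariant functions. -/
def equivariantAverage (σ : G →* ℤˣ) (μ : Measure G) (v : Euc N → ℝ) (x : Euc N) : ℝ :=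
  ∫ g, realSign σ g * v (invAct G g x) ∂μ

lemma isEquivariant_equivariantAverage [μ.IsMulLeftInvariant] (v : Euc N → ℝ) :
    IsEquivariant G σ (equivariantAverage σ μ v) := fun h x => by
  unfold equivariantAverage
  rw [← integral_mul_left_eq_self _ h, ← integral_const_mul]
  congr 1; ext g
  have h1 : invAct G (h * g) (ogAct (h : ONgrp N) x) = invAct G g x := by
    simp only [invAct, ← ogAct_mul, ← Subgroup.coe_mul]
    rw [mul_inv_rev, inv_mul_cancel_right]
  rw [h1, realSign, realSign, map_mul]
  push_cast
  ring

variable [IsProbabilityMeasure μ]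

lemma diffQuot_equivariantAverage (hs0 : 0 < s) (hsN : 2 * s < N) (hσ : Continuous σ)
    {v : Euc N → ℝ} (hv : MemHs N s Set.univ v) :
    ∀ᵐ p : Euc N × Euc N, diffQuot N s (equivariantAverage σ μ v) p =
      ∫ g, realSign σ g * diffQuot N s v (invAct G g p.1, invAct G g p.2) ∂μ := by
  have hp := two_lt_twoStar hs0 hsN
  have h := ae_integrable_comp_action (μ := μ) measurable_invAct measurePreserving_invAct
    (by linarith : 1 ≤ twoStar N s) hv.meas hv.lp
  have hsign : ∀ x, Integrable (fun g => v (invAct G g x)) μ →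
      Integrable (fun g => realSign σ g * v (invAct G g x)) μ := fun x hx =>
    hx.bdd_mul (c := 1) (continuous_realSign hσ).measurable.aestronglyMeasurable
      (ae_of_all _ fun g => (abs_intUnits (σ g)).le)
  filter_upwards [Measure.quasiMeasurePreserving_fst.ae h, Measure.quasiMeasurePreserving_snd.ae h]
    with p h1 h2
  simp only [diffQuot_invAct]
  rw [diffQuot, equivariantAverage, equivariantAverage, ← integral_sub (hsign _ h1) (hsign _ h2),
    ← integral_div]
  congr 1; ext g; ring

lemma MemHs.equivariantAverage (hs0 : 0 < s) (hsN : 2 * s < N) (hσ : Continuous σ)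
    {v : Euc N → ℝ} (hv : MemHs N s Set.univ v) :
    MemHs N s Set.univ (equivariantAverage σ μ v) := by
  have hp := two_lt_twoStar hs0 hsN
  have hε := (continuous_realSign hσ).measurable
  have hε1 : ∀ g, |realSign σ g| = 1 := fun g => abs_intUnits (σ g)
  refine MemHs.mk' (measurable_average measurable_invAct hε hv.meas)
    (integrable_average_rpow measurable_invAct measurePreserving_invAct hε hε1 (by linarith)
      hv.meas hv.lp) ?_
  have h := integrable_average_rpow (μ := μ) (F := diffQuot N s v) measurable_prod_invAct
    measurePreserving_prod_invAct hε hε1 one_le_two (measurable_diffQuot hv.meas)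
    (by simpa only [rpow_two, sq_abs] using hv.diffQuot_sq)
  refine h.congr ?_
  filter_upwards [diffQuot_equivariantAverage (μ := μ) hs0 hsN hσ hv] with p hp
  rw [hp, rpow_two, sq_abs]

lemma gagInner_equivariantAverage (hs0 : 0 < s) (hsN : 2 * s < N) (hσ : Continuous σ)
    {u v : Euc N → ℝ} (hu : MemHs N s Set.univ u) (hσu : IsEquivariant G σ u)
    (hv : MemHs N s Set.univ v) :
    gagInner N s u (equivariantAverage σ μ v) = gagInner N s u v := by
  rw [gagInner_eq, gagInner_eq, ← integral_mul_average (μ := μ) (F := diffQuot N s v)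
    measurable_prod_invAct measurePreserving_prod_invAct hσu.realSign_mul_diffQuot
    (hu.integrable_diffQuot_mul hv)]
  refine integral_congr_ae ?_
  filter_upwards [diffQuot_equivariantAverage (μ := μ) hs0 hsN hσ hv] with p hp
  rw [hp]

/-- Principle of symmetric criticality for minimizers of the Sobolev quotient. -/
lemma pairing_eq_zero_of_minimizer (μ : Measure G) [IsProbabilityMeasure μ]
    [μ.IsMulLeftInvariant] (hs0 : 0 < s) (hsN : 2 * s < N)
    (hσ : Continuous σ) {u v : Euc N → ℝ} {S : ℝ}
    (hu : MemHs N s Set.univ u) (hσu : IsEquivariant G σ u) (hv : MemHs N s Set.univ v)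
    (hS : 0 ≤ S) (hu0 : 0 < critInt N s u) (huN : gagSq N s u = critInt N s u)
    (huS : S * critInt N s u ^ (2 / twoStar N s) = gagSq N s u)
    (hmin : ∀ w : Euc N → ℝ, MemHs N s Set.univ w → IsEquivariant G σ w →
        S * critInt N s w ^ (2 / twoStar N s) ≤ gagSq N s w) :
    pairing N s Set.univ u v = 0 := by
  have hw := hv.equivariantAverage (μ := μ) hs0 hsN hσ
  have hσw := isEquivariant_equivariantAverage (σ := σ) (μ := μ) v
  have h := gagInner_eq_of_minimizer hs0 hsN hu hw hS hu0 huN huS fun ε =>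
    hmin _ (hu.add hs0 hsN (hw.const_mul ε)) (hσu.add (hσw.const_mul ε))
  rw [gagInner_equivariantAverage hs0 hsN hσ hu hσu hv] at h
  rw [pairing_univ, h, sub_eq_zero]
  exact integral_mul_average measurable_invAct measurePreserving_invAct
    (hσu.realSign_mul_rpow _) (hu.integrable_abs_rpow_sub_two_mul hs0 hsN hv)

end SymmetricCriticality

section Haar

lemma exists_isMulLeftInvariant_isProbabilityMeasure {N : ℕ} {G : Subgroup (ONgrp N)}
    (hGc : IsClosed (G : Set (ONgrp N))) [MeasurableSpace G] [BorelSpace G] :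
    ∃ μ : Measure G, μ.IsMulLeftInvariant ∧ IsProbabilityMeasure μ := by
  have := compactSpace_orthogonalGroup N
  have : CompactSpace G := isCompact_iff_compactSpace.1 hGc.isCompact
  exact ⟨Measure.haarMeasure ⊤, inferInstance, ⟨Measure.haarMeasure_self⟩⟩

end Haar

end

/-- the energy attains its minimum on the Nehari manifold `N(ℝ^N)^σ_G`, and
consequently the fractional critical Schrödinger equation has a nontrivial `σ`-equivariant
solution. -/
theorem statement18 (N : ℕ) (s : ℝ) (hN : 2 ≤ N) (hs0 : 0 < s) (hs1 : s < 1)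
    (hsN : 2 * s < N)
    (G : Subgroup (ONgrp N)) (hGc : IsClosed (G : Set (ONgrp N)))
    (hG1 : CondG1 G)
    (σ : G →* ℤˣ) (hσ : Continuous σ) (hσs : Function.Surjective σ) (hG2 : CondG2 G σ) :
    (∃ u : Euc N → ℝ, MemHs N s Set.univ u ∧ IsEquivariant G σ u ∧
      ¬ (∀ᵐ x : Euc N, u x = 0) ∧ nehariFun N s Set.univ u = 0 ∧
      energy N s Set.univ u = mval N s Set.univ G σ) ∧
    (∃ u : Euc N → ℝ, MemHs N s Set.univ u ∧ IsEquivariant G σ u ∧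
      ¬ (∀ᵐ x : Euc N, u x = 0) ∧
      ∀ v : Euc N → ℝ, MemHs N s Set.univ v → pairing N s Set.univ u v = 0) := by
  borelize ↥G
  obtain ⟨μ, hμ, hμ1⟩ := exists_isMulLeftInvariant_isProbabilityMeasure hGc
  obtain ⟨u, S, hu, hσu, hu0, huN, hS, huS, hmin⟩ := exists_nehari_minimizer hs0 hsN hG1
    (exists_equivariant_ne_zero hs0 hs1 hsN hGc hσ hσs hG2)
  have hne := not_ae_zero_of_critInt_ne hs0 hsN hu0.ne'
  refine ⟨⟨u, hu, hσu, hne, ?_, energy_eq_mval hs0 hsN hu hσu hu0 huN huS hmin⟩,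
    ⟨u, hu, hσu, hne, fun v hv => ?_⟩⟩
  · rw [nehariFun_univ, huN, sub_self]
  · exact pairing_eq_zero_of_minimizer μ hs0 hsN hσ hu hσu hv hS.le hu0 huN huS hmin

end
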